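/- For every n ≥ 1 and every sequence (ε₁,…,ε_n) ∈ {0,1}^n, the unnormalized trace solution S₀(z) commutes with the type-A generalized quantum group action in the following sense: with the type-A actions π_x on the first tensor factor and π_y on the second, specialized at x = z, y = 1 (scalars in the field of formal Laurent series in z over ℂ(q)), one has Δ'(g) ∘ S₀(z) = S₀(z) ∘ Δ(g) as endomorphisms of 𝒲⊗𝒲 for every g ∈ {e_i, f_i, k_i^{±1} : i ∈ ℤ/nℤ}. -/

import Mathlib

/-!
The matrix elements of `S₀(z)` are traces, over an auxiliary label running around the cycle of `n`
sites, of products of local weights (the 3D `R` at sites with `ε = 0`, the 3D `L` at sites with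
`ε = 1`). Conservation of the labels determines all auxiliary labels from the one at the cut, so the
coefficient of `z^N` in a matrix element is a single product (`tz_coeff`).

The generators `e_r` and `f_r` change occupation numbers only at the two neighbouring sites `r - 1`
and `r`. In the four terms of an intertwining relation the products differ only in the two factors
at these sites and in the auxiliary label between them, which takes two neighbouring values. Hence
everything reduces to an identity among products of two local weights (`pair_e`, `pair_f`). That
identity follows from relations at a single site: two expressing the left weights of the first
coproduct through those of the second (`site_e1`, `site_e2`, `site_f1`, `site_f2`), and two dual
ones for the right weights (`site_e3`, `site_e4`, `site_f3`, `site_f4`). On substitution the four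
mixed products cancel. For the 3D `L` the site relations are a finite check; for the 3D `R` they are
contiguity relations of a terminating basic hypergeometric sum (`rs_e1`, …, `rs_f4`), which follow
from the Pascal rules for Gaussian binomials after a shift of the summation index.

When the cut lies between the two sites, that is for `r = 0`, the change of the auxiliary label there
is multiplication by `z^{±1}`; this is the specialization `x = z`, `y = 1`. The relation for `k_r`
is conservation of `a + b`. To avoid boundary cases, matrix elements are extended by zero to
arbitrary integer labels (`tz`), and every generator is a weighted shift (`sh`, `sh2`).
-/

open scoped BigOperators

set_option synthInstance.maxHeartbeats 1000000
set_option maxHeartbeats 1000000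

noncomputable section

namespace TetraGQ

/-! ## Scalar ingredients -/

/-- `(a;qb)_m = ∏_{k=0}^{m-1} (1 - a qb^k)`. -/
def poch (qb a : ℂ) (m : ℕ) : ℂ := ∏ k ∈ Finset.range m, (1 - a * qb ^ k)

/-- The `q`-binomial `binom(m,k)_qb`, zero unless `k ≤ m`. -/
def qbinom (qb : ℂ) (m k : ℕ) : ℂ :=
  if k ≤ m then poch qb qb m / (poch qb qb k * poch qb qb (m - k)) else 0

/-- `[m] = (q^m - q^{-m})/(q - q^{-1})`. -/
def qnum (q : ℂ) (m : ℕ) : ℂ := (q ^ m - q⁻¹ ^ m) / (q - q⁻¹)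

/-- `[m]! = ∏_{k=1}^m [k]`. -/
def qfac (q : ℂ) (m : ℕ) : ℂ := ∏ k ∈ Finset.range m, qnum q (k + 1)

/-- The symmetric `q`-binomial `[m choose k]`, zero unless `k ≤ m`. -/
def qbin (q : ℂ) (m k : ℕ) : ℂ :=
  if k ≤ m then qfac q m / (qfac q k * qfac q (m - k)) else 0

/-- The 3D `R` matrix entry `R^{a,b,c}_{i,j,k}`. -/
def R3 (q : ℂ) (a b c i j k : ℕ) : ℂ :=
  (if a + b = i + j ∧ b + c = j + k then (1 : ℂ) else 0) *
    ∑ lam ∈ Finset.range (b + 1),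
      (-1 : ℂ) ^ lam *
        q ^ ((i : ℤ) * ((c : ℤ) - (j : ℤ)) + ((k : ℤ) + 1) * (lam : ℤ) +
            ((b : ℤ) - (lam : ℤ)) * ((b : ℤ) - (lam : ℤ) - (k : ℤ))) *
        (poch (q ^ 2) (q ^ 2) (c + (b - lam)) / poch (q ^ 2) (q ^ 2) c) *
        qbinom (q ^ 2) i (b - lam) * qbinom (q ^ 2) j lam

/-- The 3D `L` matrix entry `L^{a,b,c}_{i,j,k}`. -/
def L3 (q : ℂ) (a b c i j k : ℕ) : ℂ :=
  if a = 0 ∧ b = 0 ∧ i = 0 ∧ j = 0 ∧ c = k then 1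
  else if a = 1 ∧ b = 1 ∧ i = 1 ∧ j = 1 ∧ c = k then 1
  else if a = 0 ∧ b = 1 ∧ i = 0 ∧ j = 1 ∧ c = k then -q ^ (k + 1)
  else if a = 1 ∧ b = 0 ∧ i = 1 ∧ j = 0 ∧ c = k then q ^ k
  else if a = 0 ∧ b = 1 ∧ i = 1 ∧ j = 0 ∧ c + 1 = k then 1 - q ^ (2 * k)
  else if a = 1 ∧ b = 0 ∧ i = 0 ∧ j = 1 ∧ c = k + 1 then 1
  else 0

/-- `S^(0) = R`, `S^(1) = L`. -/
def Sg (q : ℂ) (e : Bool) (a b c i j k : ℕ) : ℂ :=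
  if e then L3 q a b c i j k else R3 q a b c i j k

/-- Coefficient of `z^{c0}` in the trace solution matrix element
`S₀(z)^{a,b}_{i,j}`. -/
def trCoef (q : ℂ) {n : ℕ} [NeZero n] (ε : Fin n → Bool) (a b i j : Fin n → ℕ)
    (c0 : ℕ) : ℂ :=
  ∑ᶠ c : Fin n → ℕ,
    if c 0 = c0 then
      ∏ t : Fin n, Sg q (ε t) (a t) (b t) (c t) (i t) (j t) (c (t + 1))
    else 0

/-- Coefficient of `z^{c0}` in the boundary solution matrix element
`S₀^{1,1}(z)^{a,b}_{i,j}`. -/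
def bdCoef (q : ℂ) {n : ℕ} (ε : Fin n → Bool) (a b i j : Fin n → ℕ) (c0 : ℕ) : ℂ :=
  ∑ᶠ c : Fin (n + 1) → ℕ,
    if c 0 = c0 then
      poch (q ^ 2) (q ^ 2) c0 / (poch q q c0 * poch q q (c (Fin.last n))) *
        ∏ t : Fin n, Sg q (ε t) (a t) (b t) (c t.castSucc) (i t) (j t) (c t.succ)
    else 0

/-- Coefficient of `z^{c0}` in the boundary solution matrix element
`S₀^{s,t}(z)^{a,b}_{i,j}`. -/
def bdCoefST (q : ℂ) (s t : ℕ) {n : ℕ} (ε : Fin n → Bool) (a b i j : Fin n → ℕ)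
    (c0 : ℕ) : ℂ :=
  ∑ᶠ c : Fin (n + 1) → ℕ,
    if c 0 = c0 then
      poch (q ^ 2) (q ^ 2) (s * c0) /
          (poch (q ^ s ^ 2) (q ^ s ^ 2) c0 * poch (q ^ t ^ 2) (q ^ t ^ 2) (c (Fin.last n))) *
        ∏ u : Fin n,
          Sg q (ε u) (a u) (b u)
            (if u.castSucc = 0 then s * c0 else c u.castSucc) (i u) (j u)
            (if u.succ = Fin.last n then t * c (Fin.last n) else c u.succ)
    else 0

/-! ## The spaces `𝒲` and `𝒲⊗𝒲` -/

/-- `m` is an admissible occupation vector: at positions with `ε = 1` the entry is `≤ 1`. -/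
def Ok {n : ℕ} (ε : Fin n → Bool) (m : Fin n → ℕ) : Prop := ∀ t, ε t = true → m t ≤ 1

instance {n : ℕ} (ε : Fin n → Bool) : DecidablePred (Ok ε) := fun m =>
  decidable_of_iff (∀ t, ε t = true → m t ≤ 1) Iff.rfl

/-- Basis labels of `𝒲`. -/
def Idx {n : ℕ} (ε : Fin n → Bool) : Type := {m : Fin n → ℕ // Ok ε m}

/-- The space `𝒲` with basis `|m⟩`, over the field `L`. -/
abbrev W (L : Type) [Field L] {n : ℕ} (ε : Fin n → Bool) : Type := Idx ε →₀ L

/-- The space `𝒲 ⊗ 𝒲` with basis `|a⟩⊗|b⟩`, over the field `L`. -/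
abbrev WW (L : Type) [Field L] {n : ℕ} (ε : Fin n → Bool) : Type := (Idx ε × Idx ε) →₀ L

/-- The ket `|m⟩ ∈ 𝒲`; it is `0` if any coordinate is out of range. -/
def ket (L : Type) [Field L] {n : ℕ} (ε : Fin n → Bool) (m : Fin n → ℤ) : W L ε :=
  if h : (∀ t, 0 ≤ m t) ∧ Ok ε (fun t => (m t).toNat) then
    Finsupp.single ⟨fun t => (m t).toNat, h.2⟩ 1
  else 0

/-- The ket `|a⟩⊗|b⟩ ∈ 𝒲⊗𝒲`; it is `0` if any coordinate is out of range. -/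
def kk (L : Type) [Field L] {n : ℕ} (ε : Fin n → Bool) (a b : Fin n → ℤ) : WW L ε :=
  if h : ((∀ t, 0 ≤ a t) ∧ Ok ε (fun t => (a t).toNat)) ∧
      ((∀ t, 0 ≤ b t) ∧ Ok ε (fun t => (b t).toNat)) then
    Finsupp.single (⟨fun t => (a t).toNat, h.1.2⟩, ⟨fun t => (b t).toNat, h.2.2⟩) 1
  else 0

/-- The linear endomorphism of a free module determined by images of basis vectors. -/
def mkEnd (L : Type) [Field L] {α : Type} (v : α → (α →₀ L)) :
    (α →₀ L) →ₗ[L] (α →₀ L) :=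
  Finsupp.lsum L fun m => LinearMap.toSpanSingleton L (α →₀ L) (v m)

/-- Product of vectors of `𝒲`, landing in `𝒲⊗𝒲`. -/
def tens (L : Type) [Field L] {n : ℕ} {ε : Fin n → Bool} (u v : W L ε) : WW L ε :=
  u.sum fun a ca => v.sum fun b cb => Finsupp.single (a, b) (ca * cb)

/-- The operator `A ⊗ B` on `𝒲⊗𝒲`. -/
def opT (L : Type) [Field L] {n : ℕ} {ε : Fin n → Bool}
    (A B : W L ε →ₗ[L] W L ε) : WW L ε →ₗ[L] WW L ε :=
  mkEnd L fun mm => tens L (A (Finsupp.single mm.1 1)) (B (Finsupp.single mm.2 1))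

/-- The subspace `𝒲_l ⊗ 𝒲_m` of `𝒲⊗𝒲`. -/
def WWlm (L : Type) [Field L] {n : ℕ} (ε : Fin n → Bool) (l m : ℕ) :
    Submodule L (WW L ε) :=
  Submodule.span L {v | ∃ p : Idx ε × Idx ε,
    (∑ t, p.1.1 t) = l ∧ (∑ t, p.2.1 t) = m ∧ v = Finsupp.single p 1}

/-- The subspace `𝒲_l` of `𝒲`. -/
def Wl (L : Type) [Field L] {n : ℕ} (ε : Fin n → Bool) (l : ℕ) : Submodule L (W L ε) :=
  Submodule.span L {v | ∃ p : Idx ε, (∑ t, p.1 t) = l ∧ v = Finsupp.single p 1}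

/-! ## The scalar field of formal Laurent series in `z` over `ℂ` -/

abbrev K : Type := LaurentSeries ℂ

/-- The power series `Σ_{c≥0} f(c) z^c` as an element of `K`. -/
def mkS (f : ℕ → ℂ) : K := HahnSeries.ofPowerSeries ℤ ℂ (PowerSeries.mk f)

/-- Constants `ℂ → K`. -/
def cK : ℂ →+* K := HahnSeries.C

/-- The variable `z ∈ K`. -/
def zK : K := mkS fun c => if c = 1 then 1 else 0

/-! ## The solutions of the Yang-Baxter equation -/

/-- The unnormalized trace solution `S₀(z)` acting on `𝒲⊗𝒲`. -/
def S0tr (q : ℂ) {n : ℕ} [NeZero n] (ε : Fin n → Bool) : WW K ε →ₗ[K] WW K ε :=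
  mkEnd K fun ij =>
    ∑ a ∈ Fintype.piFinset (fun t => Finset.range (ij.1.1 t + ij.2.1 t + 1)),
      mkS (trCoef q ε a (fun t => ij.1.1 t + ij.2.1 t - a t) ij.1.1 ij.2.1) •
        kk K ε (fun t => (a t : ℤ)) (fun t => (ij.1.1 t : ℤ) + (ij.2.1 t : ℤ) - (a t : ℤ))

/-- The unnormalized boundary solution `S₀^{1,1}(z)` acting on `𝒲⊗𝒲`. -/
def S0bd (q : ℂ) {n : ℕ} (ε : Fin n → Bool) : WW K ε →ₗ[K] WW K ε :=
  mkEnd K fun ij =>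
    ∑ a ∈ Fintype.piFinset (fun t => Finset.range (ij.1.1 t + ij.2.1 t + 1)),
      mkS (bdCoef q ε a (fun t => ij.1.1 t + ij.2.1 t - a t) ij.1.1 ij.2.1) •
        kk K ε (fun t => (a t : ℤ)) (fun t => (ij.1.1 t : ℤ) + (ij.2.1 t : ℤ) - (a t : ℤ))

/-- The unnormalized boundary solution `S₀^{s,t}(z)` acting on `𝒲⊗𝒲`. -/
def S0bdST (q : ℂ) (s t : ℕ) {n : ℕ} (ε : Fin n → Bool) : WW K ε →ₗ[K] WW K ε :=
  mkEnd K fun ij =>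
    ∑ a ∈ Fintype.piFinset (fun u => Finset.range (ij.1.1 u + ij.2.1 u + 1)),
      mkS (bdCoefST q s t ε a (fun u => ij.1.1 u + ij.2.1 u - a u) ij.1.1 ij.2.1) •
        kk K ε (fun u => (a u : ℤ)) (fun u => (ij.1.1 u : ℤ) + (ij.2.1 u : ℤ) - (a u : ℤ))

/-- The diagonal gauge operator; `Kdiag pc ε s |m⟩ = pc^{s·(m₁+⋯+m_n)} |m⟩`
(`s = -1` gives `K`, `s = 1` gives `K⁻¹`). -/
def Kdiag (pc : ℂ) {n : ℕ} (ε : Fin n → Bool) (s : ℤ) : W K ε →ₗ[K] W K ε :=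
  mkEnd K fun m => cK (pc ^ (s * ∑ t, (m.1 t : ℤ))) • Finsupp.single m 1

/-- The gauge transformed boundary solution `S̃₀^{1,1}(z) = (K⊗1) S₀^{1,1}(z) (1⊗K⁻¹)`. -/
def S0bdT (q pc : ℂ) {n : ℕ} (ε : Fin n → Bool) : WW K ε →ₗ[K] WW K ε :=
  opT K (Kdiag pc ε (-1)) LinearMap.id ∘ₗ S0bd q ε ∘ₗ opT K LinearMap.id (Kdiag pc ε 1)

/-! ## The generalized quantum group actions -/

/-- Value of an occupation vector at a natural-number position. -/
def av {n : ℕ} (m : Fin n → ℕ) (p : ℕ) : ℕ := if h : p < n then m ⟨p, h⟩ else 0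

/-- Unit coordinate vector at a natural-number position. -/
def dlt {n : ℕ} (p : ℕ) : Fin n → ℤ := fun t => if (t : ℕ) = p then 1 else 0

/-- `q_i = q` if `ε_i = 0` and `-q⁻¹` if `ε_i = 1` (0-based positions). -/
def qc (q : ℂ) {n : ℕ} (ε : Fin n → Bool) (p : ℕ) : ℂ :=
  if h : p < n then (if ε ⟨p, h⟩ then -q⁻¹ else q) else q

/-- Type A generator `e_r` of the action `π_x`. -/
def eA (q : ℂ) {L : Type} [Field L] (ι : ℂ →+* L) {n : ℕ} (ε : Fin n → Bool) (x : L)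
    (r : Fin n) : W L ε →ₗ[L] W L ε :=
  mkEnd L fun m =>
    (x ^ (if (r : ℕ) = 0 then 1 else 0) * ι (qnum q (av m.1 (((r : ℕ) + n - 1) % n)))) •
      ket L ε fun t => (m.1 t : ℤ) - dlt (((r : ℕ) + n - 1) % n) t + dlt (r : ℕ) t

/-- Type A generator `f_r` of the action `π_x`. -/
def fA (q : ℂ) {L : Type} [Field L] (ι : ℂ →+* L) {n : ℕ} (ε : Fin n → Bool) (x : L)
    (r : Fin n) : W L ε →ₗ[L] W L ε :=
  mkEnd L fun m =>
    (x ^ (if (r : ℕ) = 0 then (-1 : ℤ) else 0) * ι (qnum q (av m.1 (r : ℕ)))) •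
      ket L ε fun t => (m.1 t : ℤ) + dlt (((r : ℕ) + n - 1) % n) t - dlt (r : ℕ) t

/-- Type A generator `k_r^{s}` (`s = ±1`) of the action `π_x`. -/
def kA (q : ℂ) {L : Type} [Field L] (ι : ℂ →+* L) {n : ℕ} (ε : Fin n → Bool) (s : ℤ)
    (r : Fin n) : W L ε →ₗ[L] W L ε :=
  mkEnd L fun m =>
    ι ((qc q ε (((r : ℕ) + n - 1) % n) ^ (-(av m.1 (((r : ℕ) + n - 1) % n) : ℤ)) *
        qc q ε (r : ℕ) ^ (av m.1 (r : ℕ) : ℤ)) ^ s) • Finsupp.single m 1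

/-- Type B generator `e_r` of the action `π_x`. -/
def eB (q : ℂ) {L : Type} [Field L] (ι : ℂ →+* L) {n : ℕ} (ε : Fin n → Bool) (x : L)
    (r : Fin (n + 1)) : W L ε →ₗ[L] W L ε :=
  mkEnd L fun m =>
    if (r : ℕ) = 0 then x • ket L ε (fun t => (m.1 t : ℤ) + dlt 0 t)
    else if (r : ℕ) = n then
      ι (qnum q (av m.1 (n - 1))) • ket L ε (fun t => (m.1 t : ℤ) - dlt (n - 1) t)
    else
      ι (qnum q (av m.1 ((r : ℕ) - 1))) •
        ket L ε (fun t => (m.1 t : ℤ) - dlt ((r : ℕ) - 1) t + dlt (r : ℕ) t)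

/-- Type B generator `f_r` of the action `π_x`. -/
def fB (q : ℂ) {L : Type} [Field L] (ι : ℂ →+* L) {n : ℕ} (ε : Fin n → Bool) (x : L)
    (r : Fin (n + 1)) : W L ε →ₗ[L] W L ε :=
  mkEnd L fun m =>
    if (r : ℕ) = 0 then
      (x⁻¹ * ι (qnum q (av m.1 0))) • ket L ε (fun t => (m.1 t : ℤ) - dlt 0 t)
    else if (r : ℕ) = n then ket L ε (fun t => (m.1 t : ℤ) + dlt (n - 1) t)
    else
      ι (qnum q (av m.1 (r : ℕ))) •
        ket L ε (fun t => (m.1 t : ℤ) + dlt ((r : ℕ) - 1) t - dlt (r : ℕ) t)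

/-- Type B generator `k_r^{s}` (`s = ±1`) of the action `π_x`; `pc = i q^{-1/2}`. -/
def kB (q pc : ℂ) {L : Type} [Field L] (ι : ℂ →+* L) {n : ℕ} (ε : Fin n → Bool) (s : ℤ)
    (r : Fin (n + 1)) : W L ε →ₗ[L] W L ε :=
  mkEnd L fun m =>
    ι ((if (r : ℕ) = 0 then pc⁻¹ * qc q ε 0 ^ (av m.1 0 : ℤ)
        else if (r : ℕ) = n then pc * qc q ε (n - 1) ^ (-(av m.1 (n - 1) : ℤ))
        else qc q ε ((r : ℕ) - 1) ^ (-(av m.1 ((r : ℕ) - 1) : ℤ)) *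
          qc q ε (r : ℕ) ^ (av m.1 (r : ℕ) : ℤ)) ^ s) • Finsupp.single m 1

/-! ## Coproduct actions on `𝒲⊗𝒲` (type A) -/

/-- `Δ(e_r) = 1⊗e_r + e_r⊗k_r`, with `π_x` on the first factor, `π_y` on the second. -/
def dE (q : ℂ) {L : Type} [Field L] (ι : ℂ →+* L) {n : ℕ} (ε : Fin n → Bool) (x y : L)
    (r : Fin n) : WW L ε →ₗ[L] WW L ε :=
  opT L LinearMap.id (eA q ι ε y r) + opT L (eA q ι ε x r) (kA q ι ε 1 r)

/-- `Δ'(e_r) = e_r⊗1 + k_r⊗e_r`. -/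
def dE' (q : ℂ) {L : Type} [Field L] (ι : ℂ →+* L) {n : ℕ} (ε : Fin n → Bool) (x y : L)
    (r : Fin n) : WW L ε →ₗ[L] WW L ε :=
  opT L (eA q ι ε x r) LinearMap.id + opT L (kA q ι ε 1 r) (eA q ι ε y r)

/-- `Δ(f_r) = f_r⊗1 + k_r⁻¹⊗f_r`. -/
def dF (q : ℂ) {L : Type} [Field L] (ι : ℂ →+* L) {n : ℕ} (ε : Fin n → Bool) (x y : L)
    (r : Fin n) : WW L ε →ₗ[L] WW L ε :=
  opT L (fA q ι ε x r) LinearMap.id + opT L (kA q ι ε (-1) r) (fA q ι ε y r)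

/-- `Δ'(f_r) = 1⊗f_r + f_r⊗k_r⁻¹`. -/
def dF' (q : ℂ) {L : Type} [Field L] (ι : ℂ →+* L) {n : ℕ} (ε : Fin n → Bool) (x y : L)
    (r : Fin n) : WW L ε →ₗ[L] WW L ε :=
  opT L LinearMap.id (fA q ι ε y r) + opT L (fA q ι ε x r) (kA q ι ε (-1) r)

/-- `Δ(k_r^s) = Δ'(k_r^s) = k_r^s ⊗ k_r^s`. -/
def dK (q : ℂ) {L : Type} [Field L] (ι : ℂ →+* L) {n : ℕ} (ε : Fin n → Bool) (s : ℤ)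
    (r : Fin n) : WW L ε →ₗ[L] WW L ε :=
  opT L (kA q ι ε s r) (kA q ι ε s r)

/-! ## Coproduct actions on `𝒲⊗𝒲` (type B) -/

def dEB (q pc : ℂ) {L : Type} [Field L] (ι : ℂ →+* L) {n : ℕ} (ε : Fin n → Bool) (x y : L)
    (r : Fin (n + 1)) : WW L ε →ₗ[L] WW L ε :=
  opT L LinearMap.id (eB q ι ε y r) + opT L (eB q ι ε x r) (kB q pc ι ε 1 r)

def dEB' (q pc : ℂ) {L : Type} [Field L] (ι : ℂ →+* L) {n : ℕ} (ε : Fin n → Bool) (x y : L)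
    (r : Fin (n + 1)) : WW L ε →ₗ[L] WW L ε :=
  opT L (eB q ι ε x r) LinearMap.id + opT L (kB q pc ι ε 1 r) (eB q ι ε y r)

def dFB (q pc : ℂ) {L : Type} [Field L] (ι : ℂ →+* L) {n : ℕ} (ε : Fin n → Bool) (x y : L)
    (r : Fin (n + 1)) : WW L ε →ₗ[L] WW L ε :=
  opT L (fB q ι ε x r) LinearMap.id + opT L (kB q pc ι ε (-1) r) (fB q ι ε y r)

def dFB' (q pc : ℂ) {L : Type} [Field L] (ι : ℂ →+* L) {n : ℕ} (ε : Fin n → Bool) (x y : L)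
    (r : Fin (n + 1)) : WW L ε →ₗ[L] WW L ε :=
  opT L LinearMap.id (fB q ι ε y r) + opT L (fB q ι ε x r) (kB q pc ι ε (-1) r)

def dKB (q pc : ℂ) {L : Type} [Field L] (ι : ℂ →+* L) {n : ℕ} (ε : Fin n → Bool) (s : ℤ)
    (r : Fin (n + 1)) : WW L ε →ₗ[L] WW L ε :=
  opT L (kB q pc ι ε s r) (kB q pc ι ε s r)

/-! ## Structure constants -/

/-- Type A structure constant `D_{i,j}` (as a product over 0-based positions). -/
def DA (q : ℂ) {n : ℕ} (ε : Fin n → Bool) (i j : Fin n) : ℂ :=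
  ∏ p ∈ (({((i : ℕ) + n - 1) % n, (i : ℕ)} : Finset ℕ) ∩
      ({((j : ℕ) + n - 1) % n, (j : ℕ)} : Finset ℕ)),
    qc q ε p ^ (if i = j then (1 : ℤ) else -1)

/-- The set `⟨i⟩ = {i, i+1} ∩ [1,n]` of type B, translated to 0-based positions. -/
def nodeB (n i : ℕ) : Finset ℕ :=
  if i = 0 then {0} else if i = n then {n - 1} else {i - 1, i}

/-- Type B structure constant `D_{i,j}`. -/
def DB (q : ℂ) {n : ℕ} (ε : Fin n → Bool) (i j : Fin (n + 1)) : ℂ :=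
  ∏ p ∈ nodeB n (i : ℕ) ∩ nodeB n (j : ℕ), qc q ε p ^ (if i = j then (1 : ℤ) else -1)

/-! ## Distinguished vectors -/

/-- The vector `J_{n,j} = Σ_{i, Σi=j} q^{inv(i)} |i⟩⊗|1-i⟩`. -/
def Jfull (q : ℂ) {L : Type} [Field L] (ι : ℂ →+* L) {n : ℕ} (ε : Fin n → Bool)
    (j : ℕ) : WW L ε :=
  ∑ i ∈ Fintype.piFinset (fun _ : Fin n => Finset.range 2),
    (if (∑ t, i t) = j then
        ι (q ^ (∑ s : Fin n, ∑ t : Fin n, if s < t then i s * (1 - i t) else 0))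
      else 0) •
      kk L ε (fun t => (i t : ℤ)) (fun t => 1 - (i t : ℤ))

/-- Extension of a `Fin s`-tuple to `ℕ` by zero. -/
def ivf {s : ℕ} (i : Fin s → ℕ) : ℕ → ℕ := fun p => if h : p < s then i ⟨p, h⟩ else 0

/-- `inv(i₁,…,i_s) = Σ_{p<r} i_p (1 - i_r)`. -/
def invv (s : ℕ) (iv : ℕ → ℕ) : ℕ :=
  ∑ p ∈ Finset.range s, ∑ r ∈ Finset.range s, if p < r then iv p * (1 - iv r) else 0

/-- Occupation vector `(0^{nn-s-t}, i₁,…,i_s, 1^t)`. -/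
def winA (nn s t : ℕ) (iv : ℕ → ℕ) : Fin nn → ℤ := fun u =>
  if (u : ℕ) < nn - s - t then 0
  else if (u : ℕ) < nn - t then (iv ((u : ℕ) - (nn - s - t)) : ℤ)
  else 1

/-- The singular vector `ξ_t^{l,m}` for `κ = n`. -/
def xiA (q : ℂ) {L : Type} [Field L] (ι : ℂ →+* L) {n : ℕ} (ε : Fin n → Bool)
    (l m t : ℕ) : WW L ε :=
  ∑ i ∈ Fintype.piFinset (fun _ : Fin (l + m - 2 * t) => Finset.range 2),
    (if (∑ u, i u) = l - t then ι (q ^ invv (l + m - 2 * t) (ivf i)) else 0) •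
      kk L ε (winA n (l + m - 2 * t) t (ivf i))
        (winA n (l + m - 2 * t) t (fun p => 1 - ivf i p))

/-- Occupation vector `(0^{nn-s-1}, i₁,…,i_s, last)`. -/
def winA1 (nn s : ℕ) (iv : ℕ → ℕ) (last : ℤ) : Fin nn → ℤ := fun u =>
  if (u : ℕ) < nn - s - 1 then 0
  else if (u : ℕ) < nn - 1 then (iv ((u : ℕ) - (nn - s - 1)) : ℤ)
  else last

/-- The singular vector `ξ_s^{l,m}` for `κ = n-1`. -/
def xiA1 (q : ℂ) {L : Type} [Field L] (ι : ℂ →+* L) {n : ℕ} (ε : Fin n → Bool)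
    (l m s : ℕ) : WW L ε :=
  ∑ j ∈ Finset.range (s + 1),
    ∑ i ∈ Fintype.piFinset (fun _ : Fin s => Finset.range 2),
      (if (∑ u, i u) = s - j then
          ι ((-1 : ℂ) ^ j * q ^ (j * (m - s + 1)) * q ^ invv s (ivf i))
        else 0) •
        kk L ε (winA1 n s (ivf i) ((l : ℤ) + (j : ℤ) - (s : ℤ)))
          (winA1 n s (fun p => 1 - ivf i p) ((m : ℤ) - (j : ℤ)))

/-- The singular vector `ξ_s^{l,m}` for `0 ≤ κ ≤ n-2`. -/
def xiA2 (q : ℂ) {L : Type} [Field L] (ι : ℂ →+* L) {n : ℕ} (ε : Fin n → Bool)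
    (l m s : ℕ) : WW L ε :=
  ∑ j ∈ Finset.range (s + 1),
    ι ((-1 : ℂ) ^ j * q ^ ((j : ℤ) * (2 * (s : ℤ) - (m : ℤ) - (j : ℤ) - 1) + (m : ℤ) * (s : ℤ)) *
        qbin q s j) •
      kk L ε
        (fun u => if (u : ℕ) < n - 2 then 0
          else if (u : ℕ) = n - 2 then (j : ℤ) else (l : ℤ) - (j : ℤ))
        (fun u => if (u : ℕ) < n - 2 then 0
          else if (u : ℕ) = n - 2 then (s : ℤ) - (j : ℤ) else (m : ℤ) - (s : ℤ) + (j : ℤ))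

/-- The type B singular vector `ξ_l`. -/
def xiB (q pc : ℂ) {L : Type} [Field L] (ι : ℂ →+* L) {n : ℕ} (ε : Fin n → Bool)
    (l : ℕ) : WW L ε :=
  ∑ m ∈ Finset.range (l + 1),
    ι ((-pc) ^ (-(m : ℤ)) * q ^ ((m : ℤ) * (l : ℤ) - ((m * (m + 1) / 2 : ℕ) : ℤ)) *
        qbin q l m) •
      kk L ε (fun u => if (u : ℕ) = n - 1 then (m : ℤ) else 0)
        (fun u => if (u : ℕ) = n - 1 then (l : ℤ) - (m : ℤ) else 0)

/-! ## Miscellany -/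

/-- Apply a list of operators, the rightmost element of the list acting first. -/
def appList {L : Type} [Field L] {n : ℕ} {ε : Fin n → Bool}
    (ops : List (WW L ε →ₗ[L] WW L ε)) (v : WW L ε) : WW L ε :=
  ops.foldr (fun A w => A w) v

/-- A natural number as an element of `Fin n`. -/
def mfin {n : ℕ} [NeZero n] (p : ℕ) : Fin n :=
  ⟨p % n, Nat.mod_lt p (Nat.pos_of_ne_zero (NeZero.ne n))⟩

/-- Reference weight-`l` occupation vector: `(0^{n-l},1^l)` if `κ = n`, `l·e_n` otherwise. -/
def refAN (n κ l : ℕ) : Fin n → ℕ := fun t =>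
  if κ = n then (if n - l ≤ (t : ℕ) then 1 else 0) else (if (t : ℕ) = n - 1 then l else 0)

/-- The flip `P(u⊗v) = v⊗u` on `𝒲⊗𝒲`. -/
def Pop (L : Type) [Field L] {n : ℕ} (ε : Fin n → Bool) : WW L ε →ₗ[L] WW L ε :=
  mkEnd L fun p => Finsupp.single (p.2, p.1) 1

/-! ### Gaussian binomials and Pochhammer products -/

theorem one_sub_qpow_ne {q : ℂ} (hq : ∀ k : ℕ, k ≠ 0 → q ^ k ≠ 1) (k : ℕ) :
    1 - q ^ 2 * (q ^ 2) ^ k ≠ 0 := by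
  intro h
  apply hq (2 * (k + 1)) (by omega)
  rw [pow_mul, pow_succ, mul_comm]
  linear_combination -h

theorem poch_sq_ne {q : ℂ} (hq : ∀ k : ℕ, k ≠ 0 → q ^ k ≠ 1) (m : ℕ) :
    poch (q ^ 2) (q ^ 2) m ≠ 0 :=
  Finset.prod_ne_zero_iff.mpr fun k _ => one_sub_qpow_ne hq k

theorem poch_sq_succ (q : ℂ) (m : ℕ) :
    poch (q ^ 2) (q ^ 2) (m + 1) = poch (q ^ 2) (q ^ 2) m * (1 - q ^ (2 * ((m : ℤ) + 1))) := by
  have h : q ^ (2 * ((m : ℤ) + 1)) = q ^ 2 * (q ^ 2) ^ m := by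
    rw [← pow_succ', ← pow_mul]
    exact_mod_cast zpow_natCast q (2 * (m + 1))
  rw [poch, poch, Finset.prod_range_succ, h]

/-- The Gaussian binomial coefficient in base `q²`. -/
def gb (q : ℂ) (m k : ℕ) : ℂ := qbinom (q ^ 2) m k

theorem gb_zero {q : ℂ} (hq : ∀ k : ℕ, k ≠ 0 → q ^ k ≠ 1) (m : ℕ) : gb q m 0 = 1 := by
  have := poch_sq_ne hq m
  have h0 : poch (q ^ 2) (q ^ 2) 0 = 1 := by simp [poch]
  simp [gb, qbinom, h0, this]

theorem gb_of_lt (q : ℂ) {m k : ℕ} (h : m < k) : gb q m k = 0 := by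
  simp [gb, qbinom, Nat.not_le.mpr h]

theorem gb_add {q : ℂ} (k d : ℕ) :
    gb q (k + d) k = poch (q ^ 2) (q ^ 2) (k + d) /
      (poch (q ^ 2) (q ^ 2) k * poch (q ^ 2) (q ^ 2) d) := by
  simp [gb, qbinom]

/-- The ratio of horizontally adjacent Gaussian binomials. -/
theorem gb_down {q : ℂ} (hq : ∀ k : ℕ, k ≠ 0 → q ^ k ≠ 1) (m k : ℕ) :
    (1 - q ^ (2 * ((k : ℤ) + 1))) * gb q m (k + 1) =
      (1 - q ^ (2 * ((m : ℤ) - k))) * gb q m k := by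
  rcases lt_trichotomy m k with h | h | h
  · rw [gb_of_lt q h, gb_of_lt q (by omega)]; simp
  · subst h; rw [gb_of_lt q (Nat.lt_succ_self m)]; simp
  · obtain ⟨d, rfl⟩ := Nat.exists_eq_add_of_lt h
    have e1 := gb_add (q := q) (k + 1) d
    have e2 := gb_add (q := q) k (d + 1)
    rw [show k + d + 1 = k + 1 + d by ring, e1]
    rw [show k + (d + 1) = k + 1 + d by ring] at e2
    rw [e2, poch_sq_succ q k, poch_sq_succ q d]
    have h1 := poch_sq_ne hq k
    have h2 := poch_sq_ne hq d
    have h3 := poch_sq_ne hq (k + 1)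
    have h4 := poch_sq_ne hq (d + 1)
    rw [poch_sq_succ] at h3 h4
    have h3' := right_ne_zero_of_mul h3
    have h4' := right_ne_zero_of_mul h4
    rw [show (2 * (((k + 1 + d : ℕ) : ℤ) - k)) = 2 * ((d : ℤ) + 1) by push_cast; ring]
    generalize q ^ (2 * ((d : ℤ) + 1)) = u at *
    generalize q ^ (2 * ((k : ℤ) + 1)) = v at *
    field_simp

/-- The ratio of vertically adjacent Gaussian binomials. -/
theorem gb_up {q : ℂ} (hq : ∀ k : ℕ, k ≠ 0 → q ^ k ≠ 1) (m k : ℕ) :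
    (1 - q ^ (2 * ((m : ℤ) + 1))) * gb q m k =
      (1 - q ^ (2 * ((m : ℤ) + 1 - k))) * gb q (m + 1) k := by
  rcases lt_trichotomy (m + 1) k with h | h | h
  · rw [gb_of_lt q h, gb_of_lt q (by omega)]; simp
  · subst h; rw [gb_of_lt q (Nat.lt_succ_self m)]; simp
  · obtain ⟨d, rfl⟩ := Nat.exists_eq_add_of_le (Nat.lt_succ_iff.mp h)
    have e1 := gb_add (q := q) k d
    have e2 := gb_add (q := q) k (d + 1)
    rw [← add_assoc] at e2
    rw [e1, e2, poch_sq_succ q (k + d), poch_sq_succ q d]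
    have h1 := poch_sq_ne hq k
    have h2 := poch_sq_ne hq d
    have h4 := poch_sq_ne hq (d + 1)
    rw [poch_sq_succ] at h4
    have h4' := right_ne_zero_of_mul h4
    rw [show (2 * (((k + d : ℕ) : ℤ) + 1 - k)) = 2 * ((d : ℤ) + 1) by push_cast; ring]
    generalize q ^ (2 * ((d : ℤ) + 1)) = u at *
    field_simp

/-- The absorption identity `(1 - Q^m) binom(m-1,k) = (1 - Q^{m-k}) binom(m,k)`, `Q = q²`. At
`m = 0` the truncated subtraction is harmless. -/
theorem gb_pred {q : ℂ} (hq : ∀ k : ℕ, k ≠ 0 → q ^ k ≠ 1) (m k : ℕ) :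
    (1 - q ^ (2 * (m : ℤ))) * gb q (m - 1) k = (1 - q ^ (2 * ((m : ℤ) - k))) * gb q m k := by
  rcases m with _ | m
  · rcases k with _ | k
    · simp
    · rw [gb_of_lt q (Nat.succ_pos k)]; simp
  · have := gb_up hq m k
    push_cast
    simpa using this

theorem one_sub_zpow_ne {q : ℂ} (hq : ∀ k : ℕ, k ≠ 0 → q ^ k ≠ 1) (k : ℕ) :
    1 - q ^ (2 * ((k : ℤ) + 1)) ≠ 0 := by
  have h := poch_sq_ne hq (k + 1)
  rw [poch_sq_succ] at h
  exact right_ne_zero_of_mul h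

theorem gb_pascal {q : ℂ} (hq0 : q ≠ 0) (hq : ∀ k : ℕ, k ≠ 0 → q ^ k ≠ 1) (m k : ℕ) :
    gb q (m + 1) (k + 1) = gb q m k + q ^ (2 * ((k : ℤ) + 1)) * gb q m (k + 1) := by
  apply mul_left_cancel₀ (one_sub_zpow_ne hq k)
  have h1 := gb_down hq (m + 1) k
  have h2 := gb_up hq m k
  have h3 := gb_down hq m k
  have h4 : q ^ (2 * ((m : ℤ) + 1)) = q ^ (2 * ((k : ℤ) + 1)) * q ^ (2 * ((m : ℤ) - k)) := by
    rw [← zpow_add₀ hq0]; congr 1; ring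
  push_cast at h1
  rw [h1, ← h2, h4]
  linear_combination (-q ^ (2 * ((k : ℤ) + 1))) * h3

theorem gb_pascal' {q : ℂ} (hq0 : q ≠ 0) (hq : ∀ k : ℕ, k ≠ 0 → q ^ k ≠ 1) (m k : ℕ) :
    gb q (m + 1) (k + 1) = gb q m (k + 1) + q ^ (2 * ((m : ℤ) - k)) * gb q m k := by
  linear_combination gb_pascal hq0 hq m k - gb_down hq m k

/-- The product `(q^{2c+2};q²)_m`, with an integer `c` so that `c = -1` is allowed. -/
def sp (q : ℂ) (c : ℤ) (m : ℕ) : ℂ := ∏ s ∈ Finset.range m, (1 - q ^ (2 * (c + 1 + s)))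

theorem sp_succ (q : ℂ) (c : ℤ) (m : ℕ) :
    sp q c (m + 1) = sp q c m * (1 - q ^ (2 * (c + 1 + m))) := by
  rw [sp, Finset.prod_range_succ, sp]

theorem sp_shift (q : ℂ) (c : ℤ) (m : ℕ) :
    (1 - q ^ (2 * (c + 1))) * sp q (c + 1) m = sp q c (m + 1) := by
  rw [sp, sp, Finset.prod_range_succ', mul_comm]
  congr 1
  · refine Finset.prod_congr rfl fun s _ => ?_
    push_cast
    ring_nf
  · simp

theorem sp_nat {q : ℂ} (hq : ∀ k : ℕ, k ≠ 0 → q ^ k ≠ 1) (c m : ℕ) :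
    poch (q ^ 2) (q ^ 2) (c + m) / poch (q ^ 2) (q ^ 2) c = sp q c m := by
  induction m with
  | zero => simp [sp, poch_sq_ne hq c]
  | succ m ih =>
    rw [sp_succ, ← ih, ← add_assoc, poch_sq_succ]
    push_cast
    rw [show (2 * ((c : ℤ) + m + 1)) = 2 * (c + 1 + m) by ring]
    ring

theorem sp_neg_one (q : ℂ) (m : ℕ) : sp q (-1) (m + 1) = 0 := by
  rw [sp, Finset.prod_range_succ']
  simp

/-! ### The summand of the three-dimensional `R` -/

/-- Sign and power of `q` in the summand of the 3D `R`. -/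
def wt (q : ℂ) (i j c k : ℤ) (l m : ℕ) : ℂ :=
  (-1) ^ l * q ^ (i * (c - j) + (k + 1) * l + m * (m - k))

theorem wt_succ {q : ℂ} (hq0 : q ≠ 0) (i j c k : ℤ) (l m : ℕ) :
    wt q i j c k (l + 1) m = -q ^ (k + 1) * wt q i j c k l m := by
  rw [wt, wt, pow_succ, show i * (c - j) + (k + 1) * ((l + 1 : ℕ) : ℤ) + m * (m - k) =
    (k + 1) + (i * (c - j) + (k + 1) * l + m * (m - k)) by push_cast; ring, zpow_add₀ hq0 (k + 1)]
  ring

theorem wt_rel {q : ℂ} (hq0 : q ≠ 0) {i j c k i' j' c' k' : ℤ} {l m m' : ℕ} (e : ℤ)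
    (h : i' * (c' - j') + (k' + 1) * l + m' * (m' - k') =
      e + (i * (c - j) + (k + 1) * l + m * (m - k))) :
    wt q i' j' c' k' l m' = q ^ e * wt q i j c k l m := by
  rw [wt, wt, h, zpow_add₀ hq0 e]
  ring

/-- The sum in the definition of the 3D `R`, with integers `c` and `k` allowed. -/
def rs (q : ℂ) (i j b : ℕ) (c k : ℤ) : ℂ :=
  ∑ p ∈ Finset.HasAntidiagonal.antidiagonal b,
    wt q i j c k p.1 p.2 * (sp q c p.2 * gb q i p.2 * gb q j p.1)

theorem R3_eq {q : ℂ} (hq : ∀ k : ℕ, k ≠ 0 → q ^ k ≠ 1) {a b c i j k : ℕ}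
    (h1 : a + b = i + j) (h2 : b + c = j + k) : R3 q a b c i j k = rs q i j b c k := by
  rw [R3, if_pos ⟨h1, h2⟩, one_mul, rs, Finset.Nat.sum_antidiagonal_eq_sum_range_succ
    (fun l m => wt q i j c k l m * (sp q c m * gb q i m * gb q j l))]
  refine Finset.sum_congr rfl fun l hl => ?_
  have hl' : l ≤ b := Nat.lt_succ_iff.mp (Finset.mem_range.mp hl)
  rw [sp_nat hq, wt, gb, gb]
  push_cast [hl']
  ring

/-- Beyond the conservation-law range `b ≤ i + j` all summands vanish. -/
theorem rs_of_lt (q : ℂ) {i j b : ℕ} (c k : ℤ) (h : i + j < b) : rs q i j b c k = 0 := by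
  refine Finset.sum_eq_zero fun p hp => ?_
  rw [Finset.HasAntidiagonal.mem_antidiagonal] at hp
  by_cases hi : i < p.2
  · rw [gb_of_lt q hi]; ring
  · rw [gb_of_lt q (show j < p.1 by omega)]; ring

/-- At `c = -1` only the summand `(l,m) = (b,0)` could survive, and it contains `binom(j,b) = 0`. -/
theorem rs_neg_one (q : ℂ) {i j b : ℕ} (k : ℤ) (h : j < b) : rs q i j b (-1) k = 0 := by
  refine Finset.sum_eq_zero fun p hp => ?_
  rw [Finset.HasAntidiagonal.mem_antidiagonal] at hp
  rcases hm : p.2 with _ | m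
  · rw [gb_of_lt q (show j < p.1 by omega)]; ring
  · rw [sp_neg_one]; ring

/-! ### Summation by shifting along an antidiagonal -/

/-- A sum over the antidiagonal of `b + 1` of terms vanishing at one or the other end is a sum over
the antidiagonal of `b`: the first summand is reindexed by `l ↦ l + 1`, the second by
`m ↦ m + 1`. -/
theorem anti_split (b : ℕ) (f g : ℕ → ℕ → ℂ) (hf : ∀ m, f 0 m = 0) (hg : ∀ l, g l 0 = 0) :
    ∑ p ∈ Finset.HasAntidiagonal.antidiagonal (b + 1), (f p.1 p.2 + g p.1 p.2) =
      ∑ p ∈ Finset.HasAntidiagonal.antidiagonal b, (f (p.1 + 1) p.2 + g p.1 (p.2 + 1)) := by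
  rw [Finset.sum_add_distrib, Finset.sum_add_distrib]
  congr 1
  · rw [Finset.Nat.sum_antidiagonal_succ, hf, zero_add]
  · rw [Finset.Nat.sum_antidiagonal_succ', hg, zero_add]

/-- Telescoping along an antidiagonal: `t` splits as `f + g`, and consecutive pieces cancel. -/
theorem anti_zero (b : ℕ) (t f g : ℕ → ℕ → ℂ) (hf : ∀ m, f 0 m = 0) (hg : ∀ l, g l 0 = 0)
    (ht : ∀ l m, l + m = b → t l m = f l m + g l m)
    (h : ∀ l m, l + m + 1 = b → f (l + 1) m + g l (m + 1) = 0) :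
    ∑ p ∈ Finset.HasAntidiagonal.antidiagonal b, t p.1 p.2 = 0 := by
  rw [Finset.sum_congr rfl fun p hp => ht p.1 p.2 (Finset.HasAntidiagonal.mem_antidiagonal.mp hp)]
  rcases b with _ | b
  · simp [hf, hg]
  · rw [anti_split b f g hf hg]
    exact Finset.sum_eq_zero fun p hp => h _ _ (by rw [Finset.HasAntidiagonal.mem_antidiagonal.mp hp])

/-- The prefactor `1 - Q^i` kills the term with `i = 0`, so that the truncated `i - 1` is harmless,
and absorbs the shift of the binomial. -/
theorem rs_pred_i {q : ℂ} (hq : ∀ k : ℕ, k ≠ 0 → q ^ k ≠ 1) (i j b : ℕ) (c k : ℤ) :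
    (1 - q ^ (2 * (i : ℤ))) * rs q (i - 1) j b c k =
      ∑ p ∈ Finset.HasAntidiagonal.antidiagonal b, wt q (i - 1) j c k p.1 p.2 *
        (sp q c p.2 * ((1 - q ^ (2 * ((i : ℤ) - p.2))) * gb q i p.2) * gb q j p.1) := by
  rw [rs, Finset.mul_sum]
  refine Finset.sum_congr rfl fun p _ => ?_
  rw [← gb_pred hq]
  rcases i with _ | i
  · simp
  · push_cast
    simp only [add_sub_cancel_right]
    ring

theorem rs_pred_j {q : ℂ} (hq : ∀ k : ℕ, k ≠ 0 → q ^ k ≠ 1) (i j b : ℕ) (c k : ℤ) :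
    (1 - q ^ (2 * (j : ℤ))) * rs q i (j - 1) b c k =
      ∑ p ∈ Finset.HasAntidiagonal.antidiagonal b, wt q i (j - 1) c k p.1 p.2 *
        (sp q c p.2 * gb q i p.2 * ((1 - q ^ (2 * ((j : ℤ) - p.1))) * gb q j p.1)) := by
  rw [rs, Finset.mul_sum]
  refine Finset.sum_congr rfl fun p _ => ?_
  rw [← gb_pred hq]
  rcases j with _ | j
  · simp
  · push_cast
    simp only [add_sub_cancel_right]
    ring

/-! ### Eight contiguity relations of the 3D `R`

The relations `rs_e1`, `rs_e2`, `rs_f1`, `rs_f2` change the outgoing auxiliary label `k`, the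
relations `rs_e3`, `rs_e4`, `rs_f3`, `rs_f4` the incoming label `c`. All hold under the conservation
law for the middle and auxiliary labels, recorded as the value of `k`. After the sums are aligned,
each is an identity between single summands, by the Pascal and absorption rules for Gaussian
binomials. The lemmas with suffix `_zero` are the degenerate cases `b = 0`. -/

section
variable {q : ℂ}

theorem rs_e1 (hq0 : q ≠ 0) (hq : ∀ k : ℕ, k ≠ 0 → q ^ k ≠ 1) (i j b : ℕ) (e k : ℤ)
    (hk : k = b + e - j) :
    (1 - q ^ (2 * ((i : ℤ) + j - b))) * rs q i j b e k =
      q ^ ((i : ℤ) - b) * ((1 - q ^ (2 * (j : ℤ))) * rs q i (j - 1) b e (k + 1)) +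
      q ^ (k - b) * ((1 - q ^ (2 * (i : ℤ))) * rs q (i - 1) j b e k) := by
  rw [rs_pred_i hq, rs_pred_j hq, rs, Finset.mul_sum, Finset.mul_sum, Finset.mul_sum,
    ← Finset.sum_add_distrib]
  refine Finset.sum_congr rfl fun p hp => ?_
  obtain ⟨l, m⟩ := p
  rw [Finset.HasAntidiagonal.mem_antidiagonal] at hp
  dsimp only at hp ⊢
  rw [wt_rel hq0 (i := i) (j := j) (c := e) (k := k) (i' := i) (j' := j - 1) (c' := e)
    (k' := k + 1) (m := m) (m' := m) (i + l - m) (by ring),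
    wt_rel hq0 (i := i) (j := j) (c := e) (k := k) (i' := i - 1) (j' := j) (c' := e)
    (k' := k) (m := m) (m' := m) (j - e) (by ring)]
  have hb : (b : ℤ) = l + m := by exact_mod_cast hp.symm
  rw [hk, hb]
  simp only [two_mul, zpow_add₀ hq0, zpow_sub₀ hq0]
  field_simp
  ring

theorem rs_e2 (hq0 : q ≠ 0) (hq : ∀ k : ℕ, k ≠ 0 → q ^ k ≠ 1) (i j b : ℕ) (e k : ℤ)
    (hk : k = b + 1 + e - j) :
    (1 - q ^ (2 * ((b : ℤ) + 1))) * rs q i j (b + 1) e k =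
      (1 - q ^ (2 * k)) * ((1 - q ^ (2 * (i : ℤ))) * rs q (i - 1) j b e (k - 1)) -
      q ^ (k + 1 + i) * ((1 - q ^ (2 * (j : ℤ))) * rs q i (j - 1) b e k) := by
  have hL : (1 - q ^ (2 * ((b : ℤ) + 1))) * rs q i j (b + 1) e k =
      ∑ p ∈ Finset.HasAntidiagonal.antidiagonal (b + 1),
        (wt q i j e k p.1 p.2 * q ^ (2 * (p.2 : ℤ)) * sp q e p.2 * gb q i p.2 *
            ((1 - q ^ (2 * (p.1 : ℤ))) * gb q j p.1) +
          wt q i j e k p.1 p.2 * sp q e p.2 * ((1 - q ^ (2 * (p.2 : ℤ))) * gb q i p.2) *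
            gb q j p.1) := by
    rw [rs, Finset.mul_sum]
    refine Finset.sum_congr rfl fun p hp => ?_
    have hb : (b : ℤ) + 1 = p.1 + p.2 := by
      exact_mod_cast (Finset.HasAntidiagonal.mem_antidiagonal.mp hp).symm
    rw [hb, mul_add, zpow_add₀ hq0]
    ring
  rw [hL, anti_split b
    (fun l m => wt q i j e k l m * q ^ (2 * (m : ℤ)) * sp q e m * gb q i m *
            ((1 - q ^ (2 * (l : ℤ))) * gb q j l))
    (fun l m => wt q i j e k l m * sp q e m * ((1 - q ^ (2 * (m : ℤ))) * gb q i m) *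
            gb q j l) (by simp) (by simp), rs_pred_i hq, rs_pred_j hq, Finset.mul_sum,
    Finset.mul_sum, ← Finset.sum_sub_distrib]
  refine Finset.sum_congr rfl fun p hp => ?_
  obtain ⟨l, m⟩ := p
  rw [Finset.HasAntidiagonal.mem_antidiagonal] at hp
  dsimp only at hp ⊢
  push_cast
  rw [gb_down hq, gb_down hq, sp_succ, wt_succ hq0,
    wt_rel hq0 (i := i) (j := j) (c := e) (k := k) (i' := i) (j' := j - 1) (c' := e)
      (k' := k) (m := m) (m' := m) i (by ring),
    wt_rel hq0 (i := i) (j := j) (c := e) (k := k) (i' := i - 1) (j' := j) (c' := e)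
      (k' := k - 1) (m := m) (m' := m) (j - e - l + m) (by ring),
    wt_rel hq0 (i := i) (j := j) (c := e) (k := k) (i' := i) (j' := j) (c' := e)
      (k' := k) (m := m) (m' := m + 1) (2 * m + 1 - k) (by push_cast; ring)]
  have hb : (b : ℤ) = l + m := by exact_mod_cast hp.symm
  rw [hk, hb]
  simp only [two_mul, zpow_add₀ hq0, zpow_sub₀ hq0, zpow_one]
  field_simp
  ring

theorem rs_e3_zero (hq : ∀ k : ℕ, k ≠ 0 → q ^ k ≠ 1) (i j : ℕ) (c k : ℤ) :
    rs q i (j + 1) 0 c k = rs q i j 0 (c - 1) k := by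
  simp [rs, wt, sp, gb_zero hq]
  ring_nf

theorem rs_e3 (hq0 : q ≠ 0) (hq : ∀ k : ℕ, k ≠ 0 → q ^ k ≠ 1) (i j b : ℕ) (c k : ℤ)
    (hk : k = b + c - j) :
    rs q i (j + 1) (b + 1) c k =
      rs q i j (b + 1) (c - 1) k - q ^ (c + i + j - b + 1) * rs q i j b c k := by
  have hL : rs q i (j + 1) (b + 1) c k - rs q i j (b + 1) (c - 1) k =
      ∑ p ∈ Finset.HasAntidiagonal.antidiagonal (b + 1),
        (wt q i j (c - 1) k p.1 p.2 * sp q c p.2 * gb q i p.2 * (gb q (j + 1) p.1 - gb q j p.1) +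
          wt q i j (c - 1) k p.1 p.2 * ((sp q c p.2 - sp q (c - 1) p.2) * gb q i p.2) *
            gb q j p.1) := by
    rw [rs, rs, ← Finset.sum_sub_distrib]
    refine Finset.sum_congr rfl fun p hp => ?_
    rw [wt_rel hq0 (i := i) (j := j) (c := c - 1) (k := k) (i' := i) (j' := (j + 1 : ℕ)) (c' := c)
      (k' := k) (m := p.2) (m' := p.2) 0 (by push_cast; ring), zpow_zero]
    ring
  have hN : ∀ x y z : ℂ, x - y = -z → x = y - z := fun x y z h => by linear_combination h
  apply hN
  rw [hL, anti_split b
    (fun l m => wt q i j (c - 1) k l m * sp q c m * gb q i m * (gb q (j + 1) l - gb q j l))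
    (fun l m => wt q i j (c - 1) k l m * ((sp q c m - sp q (c - 1) m) * gb q i m) *
            gb q j l) (by simp [gb_zero hq]) (by simp [sp]), rs, Finset.mul_sum,
    ← Finset.sum_neg_distrib]
  refine Finset.sum_congr rfl fun p hp => ?_
  obtain ⟨l, m⟩ := p
  rw [Finset.HasAntidiagonal.mem_antidiagonal] at hp
  dsimp only at hp ⊢
  have h1 := gb_pascal' hq0 hq j l
  have h2 : (sp q c (m + 1) - sp q (c - 1) (m + 1)) * gb q i (m + 1) =
      sp q c m * q ^ (2 * c) * ((1 - q ^ (2 * ((i : ℤ) - m))) * gb q i m) := by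
    have h3 := sp_shift q (c - 1) m
    rw [sub_add_cancel] at h3
    rw [← gb_down hq, ← h3, sp_succ, show 2 * (c + 1 + (m : ℤ)) = 2 * c + 2 * (m + 1) by ring,
      zpow_add₀ hq0]
    ring
  rw [h1, h2, wt_succ hq0,
    wt_rel hq0 (i := i) (j := j) (c := c - 1) (k := k) (i' := i) (j' := j) (c' := c)
      (k' := k) (m := m) (m' := m) i (by ring),
    wt_rel hq0 (i := i) (j := j) (c := c - 1) (k := k) (i' := i) (j' := j) (c' := c - 1)
      (k' := k) (m := m) (m' := m + 1) (2 * m + 1 - k) (by push_cast; ring)]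
  have hb : (b : ℤ) = l + m := by exact_mod_cast hp.symm
  rw [hk, hb]
  simp only [two_mul, zpow_add₀ hq0, zpow_sub₀ hq0, zpow_one]
  field_simp
  ring

theorem rs_e4_zero (hq0 : q ≠ 0) (hq : ∀ k : ℕ, k ≠ 0 → q ^ k ≠ 1) (i j : ℕ) (c k : ℤ) :
    q ^ (j : ℤ) * rs q (i + 1) j 0 c k = q ^ c * rs q i j 0 c k := by
  have : (j : ℤ) + ((i : ℤ) + 1) * (c - j) = c + i * (c - j) := by ring
  simp [rs, wt, sp, gb_zero hq, ← zpow_natCast, ← zpow_add₀ hq0, this]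

theorem rs_e4 (hq0 : q ≠ 0) (hq : ∀ k : ℕ, k ≠ 0 → q ^ k ≠ 1) (i j b : ℕ) (c k : ℤ)
    (hk : k = b + 1 + c - j) :
    q ^ (j : ℤ) * rs q (i + 1) j (b + 1) c k =
      q ^ c * rs q i j (b + 1) c k +
        (1 - q ^ (2 * (c + 1))) * q ^ ((i : ℤ) + j - b) * rs q i j b (c + 1) k := by
  have hL : q ^ (j : ℤ) * rs q (i + 1) j (b + 1) c k - q ^ c * rs q i j (b + 1) c k =
      ∑ p ∈ Finset.HasAntidiagonal.antidiagonal (b + 1),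
        (0 + q ^ c * wt q i j c k p.1 p.2 * sp q c p.2 * (gb q (i + 1) p.2 - gb q i p.2) *
            gb q j p.1) := by
    rw [rs, rs, Finset.mul_sum, Finset.mul_sum, ← Finset.sum_sub_distrib]
    refine Finset.sum_congr rfl fun p hp => ?_
    rw [wt_rel hq0 (i := i) (j := j) (c := c) (k := k) (i' := (i + 1 : ℕ)) (j' := j) (c' := c)
      (k' := k) (m := p.2) (m' := p.2) (c - j) (by push_cast; ring), zpow_sub₀ hq0]
    field_simp
    ring
  rw [← sub_eq_iff_eq_add', hL, anti_split b (fun _ _ => 0)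
    (fun l m => q ^ c * wt q i j c k l m * sp q c m * (gb q (i + 1) m - gb q i m) *
            gb q j l) (by simp) (by simp [gb_zero hq]), rs, Finset.mul_sum]
  refine Finset.sum_congr rfl fun p hp => ?_
  obtain ⟨l, m⟩ := p
  rw [Finset.HasAntidiagonal.mem_antidiagonal] at hp
  dsimp only at hp ⊢
  rw [gb_pascal' hq0 hq, ← sp_shift,
    wt_rel hq0 (i := i) (j := j) (c := c) (k := k) (i' := i) (j' := j) (c' := c + 1)
      (k' := k) (m := m) (m' := m) i (by ring),
    wt_rel hq0 (i := i) (j := j) (c := c) (k := k) (i' := i) (j' := j) (c' := c)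
      (k' := k) (m := m) (m' := m + 1) (2 * m + 1 - k) (by push_cast; ring)]
  have hb : (b : ℤ) = l + m := by exact_mod_cast hp.symm
  rw [hk, hb]
  simp only [two_mul, zpow_add₀ hq0, zpow_sub₀ hq0, zpow_one]
  field_simp
  ring

theorem rs_f1_zero (hq0 : q ≠ 0) (hq : ∀ k : ℕ, k ≠ 0 → q ^ k ≠ 1) (i j : ℕ) (e k : ℤ)
    (hk : k = e - j) :
    rs q (i + 1) j 0 e k = q ^ (k + i) * rs q i (j + 1) 0 e (k - 1) := by
  simp [rs, wt, sp, gb_zero hq, ← zpow_natCast, ← zpow_add₀ hq0]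
  congr 1
  rw [hk]
  ring

theorem rs_f1 (hq0 : q ≠ 0) (hq : ∀ k : ℕ, k ≠ 0 → q ^ k ≠ 1) (i j b : ℕ) (e k : ℤ)
    (hk : k = b + 1 + e - j) :
    rs q i j b e (k - 1) = rs q (i + 1) j (b + 1) e k -
      q ^ (k + i) * rs q i (j + 1) (b + 1) e (k - 1) := by
  have hL : rs q (i + 1) j (b + 1) e k - q ^ (k + i) * rs q i (j + 1) (b + 1) e (k - 1) =
      ∑ p ∈ Finset.HasAntidiagonal.antidiagonal (b + 1),
        (-(q ^ k * wt q i j e (k - 1) p.1 p.2 * sp q e p.2 * gb q i p.2 *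
            (gb q (j + 1) p.1 - gb q j p.1)) +
          q ^ (e - j + p.1 - p.2) * wt q i j e (k - 1) p.1 p.2 * sp q e p.2 *
            (gb q (i + 1) p.2 - q ^ (2 * (p.2 : ℤ)) * gb q i p.2) * gb q j p.1) := by
    rw [rs, rs, Finset.mul_sum, ← Finset.sum_sub_distrib]
    refine Finset.sum_congr rfl fun p hp => ?_
    have hb : (b : ℤ) + 1 = p.1 + p.2 := by
      exact_mod_cast (Finset.HasAntidiagonal.mem_antidiagonal.mp hp).symm
    rw [wt_rel hq0 (i := i) (j := j) (c := e) (k := k - 1) (i' := (i + 1 : ℕ)) (j' := j) (c' := e)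
      (k' := k) (m := p.2) (m' := p.2) (e - j + p.1 - p.2) (by push_cast; ring),
      wt_rel hq0 (i := i) (j := j) (c := e) (k := k - 1) (i' := i) (j' := (j + 1 : ℕ)) (c' := e)
      (k' := k - 1) (m := p.2) (m' := p.2) (-i) (by push_cast; ring), hk, hb]
    simp only [two_mul, zpow_add₀ hq0, zpow_sub₀ hq0, zpow_neg]
    field_simp
    ring
  rw [hL, anti_split b
    (fun l m => -(q ^ k * wt q i j e (k - 1) l m * sp q e m * gb q i m *
            (gb q (j + 1) l - gb q j l)))
    (fun l m => q ^ (e - j + l - m) * wt q i j e (k - 1) l m * sp q e m *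
            (gb q (i + 1) m - q ^ (2 * (m : ℤ)) * gb q i m) * gb q j l)
    (by simp [gb_zero hq]) (by simp [gb_zero hq]), rs]
  refine Finset.sum_congr rfl fun p hp => ?_
  obtain ⟨l, m⟩ := p
  rw [Finset.HasAntidiagonal.mem_antidiagonal] at hp
  dsimp only at hp ⊢
  push_cast
  rw [gb_pascal' hq0 hq, gb_pascal hq0 hq, sp_succ, wt_succ hq0,
    wt_rel hq0 (i := i) (j := j) (c := e) (k := k - 1) (i' := i) (j' := j) (c' := e)
      (k' := k - 1) (m := m) (m' := m + 1) (2 * m + 2 - k) (by push_cast; ring)]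
  have hb : (b : ℤ) = l + m := by exact_mod_cast hp.symm
  rw [hk, hb]
  simp only [two_mul, zpow_add₀ hq0, zpow_sub₀ hq0, zpow_one]
  field_simp
  ring

/-- No alignment of the sums makes this relation hold summand by summand; the difference of the two
sides is a telescoping sum. -/
theorem rs_f2 (hq0 : q ≠ 0) (hq : ∀ k : ℕ, k ≠ 0 → q ^ k ≠ 1) (i j b : ℕ) (e k : ℤ)
    (hk : k = b + e - j) :
    q ^ (b : ℤ) * rs q i j b e k = q ^ k * rs q (i + 1) j b e k +
      (1 - q ^ (2 * k)) * q ^ (i : ℤ) * rs q i (j + 1) b e (k - 1) := by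
  rw [← sub_eq_zero, rs, rs, rs, Finset.mul_sum, Finset.mul_sum, Finset.mul_sum,
    ← Finset.sum_add_distrib, ← Finset.sum_sub_distrib]
  refine anti_zero b
    (fun l m => q ^ (b : ℤ) * (wt q i j e k l m * (sp q e m * gb q i m * gb q j l)) -
      (q ^ k * (wt q (i + 1 : ℕ) j e k l m * (sp q e m * gb q (i + 1) m * gb q j l)) +
      (1 - q ^ (2 * k)) * q ^ (i : ℤ) *
        (wt q i (j + 1 : ℕ) e (k - 1) l m * (sp q e m * gb q i m * gb q (j + 1) l))))
    (fun l m => q ^ (m - l : ℤ) * wt q i j e k l m * sp q e m * gb q i m *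
      (q ^ (2 * (l : ℤ)) * gb q j l - (1 - q ^ (2 * k)) * gb q (j + 1) l -
        q ^ (2 * k) * gb q j l))
    (fun l m => - (q ^ (2 * k - l - m) * wt q i j e k l m * sp q e m *
      (gb q (i + 1) m - q ^ (2 * (m : ℤ)) * gb q i m) * gb q j l))
    (by simp [gb_zero hq]) (by simp [gb_zero hq]) ?_ ?_
  · intro l m hp
    have hb : (b : ℤ) = l + m := by exact_mod_cast hp.symm
    rw [wt_rel hq0 (i := i) (j := j) (c := e) (k := k) (i' := (i + 1 : ℕ)) (j' := j) (c' := e)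
      (k' := k) (m := m) (m' := m) (e - j) (by push_cast; ring),
      wt_rel hq0 (i := i) (j := j) (c := e) (k := k) (i' := i) (j' := (j + 1 : ℕ)) (c' := e)
      (k' := k - 1) (m := m) (m' := m) (m - l - i) (by push_cast; ring), hk, hb]
    simp only [two_mul, zpow_add₀ hq0, zpow_sub₀ hq0]
    field_simp
    ring
  · intro l m hp
    have hb : (b : ℤ) = l + m + 1 := by exact_mod_cast hp.symm
    have h1 : q ^ (2 * ((l + 1 : ℕ) : ℤ)) * gb q j (l + 1) - (1 - q ^ (2 * k)) * gb q (j + 1) (l + 1)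
        - q ^ (2 * k) * gb q j (l + 1) = - (1 - q ^ (2 * (k + j - l))) * gb q j l := by
      have := gb_pascal hq0 hq j l
      have h2 := gb_down hq j l
      have h3 : q ^ (2 * (k + j - l)) = q ^ (2 * k) * q ^ (2 * ((j : ℤ) - l)) := by
        rw [← zpow_add₀ hq0]; congr 1; ring
      push_cast
      rw [this, h3]
      linear_combination (-q ^ (2 * k)) * h2
    rw [h1]
    push_cast
    rw [gb_pascal hq0 hq, sp_succ, wt_succ hq0,
      wt_rel hq0 (i := i) (j := j) (c := e) (k := k) (i' := i) (j' := j) (c' := e)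
        (k' := k) (m := m) (m' := m + 1) (2 * m + 1 - k) (by push_cast; ring)]
    rw [hk, hb]
    simp only [two_mul, zpow_add₀ hq0, zpow_sub₀ hq0, zpow_one]
    field_simp
    ring

theorem rs_f3 (hq0 : q ≠ 0) (hq : ∀ k : ℕ, k ≠ 0 → q ^ k ≠ 1) (i j b : ℕ) (c k : ℤ)
    (hk : k = b + c - j) :
    q ^ (j : ℤ) * ((1 - q ^ (2 * (i : ℤ))) * rs q (i - 1) j b c k) =
      q ^ c * (1 - q ^ (2 * ((i : ℤ) + j - b))) * rs q i j b c k +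
      q ^ ((i : ℤ) + j - b - 1) * ((1 - q ^ (2 * ((b : ℤ) + 1))) *
        rs q i j (b + 1) (c - 1) k) := by
  have hL : (1 - q ^ (2 * ((b : ℤ) + 1))) * rs q i j (b + 1) (c - 1) k =
      ∑ p ∈ Finset.HasAntidiagonal.antidiagonal (b + 1),
        (wt q i j (c - 1) k p.1 p.2 * sp q c p.2 * gb q i p.2 *
            ((1 - q ^ (2 * (p.1 : ℤ))) * gb q j p.1) +
          wt q i j (c - 1) k p.1 p.2 * ((1 - q ^ (2 * (p.1 + p.2 : ℤ))) * sp q (c - 1) p.2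
            - (1 - q ^ (2 * (p.1 : ℤ))) * sp q c p.2) * gb q i p.2 *
            gb q j p.1) := by
    rw [rs, Finset.mul_sum]
    refine Finset.sum_congr rfl fun p hp => ?_
    have hb : (b : ℤ) + 1 = p.1 + p.2 := by
      exact_mod_cast (Finset.HasAntidiagonal.mem_antidiagonal.mp hp).symm
    rw [hb]
    ring
  rw [hL, anti_split b
    (fun l m => wt q i j (c - 1) k l m * sp q c m * gb q i m *
            ((1 - q ^ (2 * (l : ℤ))) * gb q j l))
    (fun l m => wt q i j (c - 1) k l m * ((1 - q ^ (2 * (l + m : ℤ))) * sp q (c - 1) m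
            - (1 - q ^ (2 * (l : ℤ))) * sp q c m) * gb q i m *
            gb q j l) (by simp) (by simp [sp]), rs_pred_i hq, rs, Finset.mul_sum,
    Finset.mul_sum, Finset.mul_sum, ← Finset.sum_add_distrib]
  refine Finset.sum_congr rfl fun p hp => ?_
  obtain ⟨l, m⟩ := p
  rw [Finset.HasAntidiagonal.mem_antidiagonal] at hp
  dsimp only at hp ⊢
  have h2 : ((1 - q ^ (2 * (l + (m + 1 : ℕ) : ℤ))) * sp q (c - 1) (m + 1)
      - (1 - q ^ (2 * (l : ℤ))) * sp q c (m + 1)) * gb q i (m + 1) =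
      (q ^ (2 * (l : ℤ)) - q ^ (2 * c)) * sp q c m *
        ((1 - q ^ (2 * ((i : ℤ) - m))) * gb q i m) := by
    have h3 := sp_shift q (c - 1) m
    rw [sub_add_cancel] at h3
    rw [← gb_down hq, ← h3, sp_succ, show 2 * (c + 1 + (m : ℤ)) = 2 * c + 2 * (m + 1) by ring,
      zpow_add₀ hq0, show 2 * ((l : ℤ) + (m + 1 : ℕ)) = 2 * l + 2 * (m + 1) by push_cast; ring,
      zpow_add₀ hq0]
    ring
  rw [mul_assoc (wt q i j (c - 1) k l (m + 1)), h2]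
  push_cast
  rw [gb_down hq, wt_succ hq0,
    wt_rel hq0 (i := i) (j := j) (c := c) (k := k) (i' := i - 1) (j' := j) (c' := c)
      (k' := k) (m := m) (m' := m) (j - c) (by ring),
    wt_rel hq0 (i := i) (j := j) (c := c) (k := k) (i' := i) (j' := j) (c' := c - 1)
      (k' := k) (m := m) (m' := m) (-i) (by ring),
    wt_rel hq0 (i := i) (j := j) (c := c) (k := k) (i' := i) (j' := j) (c' := c - 1)
      (k' := k) (m := m) (m' := m + 1) (2 * m + 1 - k - i) (by push_cast; ring)]
  have hb : (b : ℤ) = l + m := by exact_mod_cast hp.symm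
  rw [hk, hb]
  simp only [two_mul, zpow_add₀ hq0, zpow_sub₀ hq0, zpow_one, zpow_neg]
  field_simp
  ring

theorem rs_f4 (hq0 : q ≠ 0) (hq : ∀ k : ℕ, k ≠ 0 → q ^ k ≠ 1) (i j b : ℕ) (c k : ℤ)
    (hk : k = b + 1 + c - j) :
    (1 - q ^ (2 * (j : ℤ))) * rs q i (j - 1) b c k =
      -(q ^ (c + i + j - b) * ((1 - q ^ (2 * ((b : ℤ) + 1))) * rs q i j (b + 1) c k)) +
      (1 - q ^ (2 * (c + 1))) * (1 - q ^ (2 * ((i : ℤ) + j - b))) * rs q i j b (c + 1) k := by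
  have hL : (1 - q ^ (2 * ((b : ℤ) + 1))) * rs q i j (b + 1) c k =
      ∑ p ∈ Finset.HasAntidiagonal.antidiagonal (b + 1),
        (wt q i j c k p.1 p.2 * q ^ (2 * (p.2 : ℤ)) * sp q c p.2 * gb q i p.2 *
            ((1 - q ^ (2 * (p.1 : ℤ))) * gb q j p.1) +
          wt q i j c k p.1 p.2 * sp q c p.2 * ((1 - q ^ (2 * (p.2 : ℤ))) * gb q i p.2) *
            gb q j p.1) := by
    rw [rs, Finset.mul_sum]
    refine Finset.sum_congr rfl fun p hp => ?_
    have hb : (b : ℤ) + 1 = p.1 + p.2 := by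
      exact_mod_cast (Finset.HasAntidiagonal.mem_antidiagonal.mp hp).symm
    rw [hb, mul_add, zpow_add₀ hq0]
    ring
  rw [hL, anti_split b
    (fun l m => wt q i j c k l m * q ^ (2 * (m : ℤ)) * sp q c m * gb q i m *
            ((1 - q ^ (2 * (l : ℤ))) * gb q j l))
    (fun l m => wt q i j c k l m * sp q c m * ((1 - q ^ (2 * (m : ℤ))) * gb q i m) *
            gb q j l) (by simp) (by simp), rs_pred_j hq, rs, Finset.mul_sum,
    Finset.mul_sum, ← Finset.sum_neg_distrib, ← Finset.sum_add_distrib]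
  refine Finset.sum_congr rfl fun p hp => ?_
  obtain ⟨l, m⟩ := p
  rw [Finset.HasAntidiagonal.mem_antidiagonal] at hp
  dsimp only at hp ⊢
  push_cast
  have h3 : (1 - q ^ (2 * (c + 1))) * (1 - q ^ (2 * ((i : ℤ) + j - b))) *
      (wt q i j (c + 1) k l m * (sp q (c + 1) m * gb q i m * gb q j l)) =
      (1 - q ^ (2 * ((i : ℤ) + j - b))) *
      (wt q i j (c + 1) k l m * (sp q c (m + 1) * gb q i m * gb q j l)) := by
    rw [← sp_shift]; ring
  rw [h3, gb_down hq, gb_down hq, sp_succ, wt_succ hq0,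
    wt_rel hq0 (i := i) (j := j) (c := c) (k := k) (i' := i) (j' := j - 1) (c' := c)
      (k' := k) (m := m) (m' := m) i (by ring),
    wt_rel hq0 (i := i) (j := j) (c := c) (k := k) (i' := i) (j' := j) (c' := c + 1)
      (k' := k) (m := m) (m' := m) i (by ring),
    wt_rel hq0 (i := i) (j := j) (c := c) (k := k) (i' := i) (j' := j) (c' := c)
      (k' := k) (m := m) (m' := m + 1) (2 * m + 1 - k) (by push_cast; ring)]
  have hb : (b : ℤ) = l + m := by exact_mod_cast hp.symm
  rw [hk, hb]
  simp only [two_mul, zpow_add₀ hq0, zpow_sub₀ hq0, zpow_one]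
  field_simp
  ring

end

/-! ### The local weights extended by zero to integer labels -/

/-- The 3D `R` or `L` weight with integer arguments, zero if one of them is negative. -/
def sZ (q : ℂ) (e : Bool) (a b c i j k : ℤ) : ℂ :=
  if 0 ≤ a ∧ 0 ≤ b ∧ 0 ≤ c ∧ 0 ≤ i ∧ 0 ≤ j ∧ 0 ≤ k then
    Sg q e a.toNat b.toNat c.toNat i.toNat j.toNat k.toNat
  else 0

/-- The symmetric `q`-number `[m]` at an integer `m`. -/
def qn (q : ℂ) (m : ℤ) : ℂ := (q ^ m - q ^ (-m)) / (q - q⁻¹)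

/-- `q` for a bosonic site and `-q⁻¹` for a fermionic one. -/
def qe (q : ℂ) (e : Bool) : ℂ := if e then -q⁻¹ else q

theorem qnum_eq (q : ℂ) (m : ℕ) : qnum q m = qn q m := by
  simp [qnum, qn]

theorem qn_zero (q : ℂ) : qn q 0 = 0 := by simp [qn]

theorem qn_one {q : ℂ} (hq0 : q ≠ 0) (hq : ∀ k : ℕ, k ≠ 0 → q ^ k ≠ 1) : qn q 1 = 1 := by
  have h := hq 2 (by omega)
  have : q - q⁻¹ ≠ 0 := by
    intro h'
    apply h
    field_simp at h'
    linear_combination h'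
  simp [qn, this]

theorem qn_eq {q : ℂ} (hq0 : q ≠ 0) (m : ℤ) :
    qn q m = (1 - q ^ (2 * m)) * (q ^ (-m) * (-1 / (q - q⁻¹))) := by
  rw [qn, two_mul, zpow_add₀ hq0, zpow_neg]
  have : q ^ m ≠ 0 := zpow_ne_zero _ hq0
  have e : q ^ m - (q ^ m)⁻¹ = -((1 - q ^ m * q ^ m) * (q ^ m)⁻¹) := by field_simp; ring
  rw [e]; ring

theorem sZ_neg (q : ℂ) (e : Bool) {a b c i j k : ℤ}
    (h : a < 0 ∨ b < 0 ∨ c < 0 ∨ i < 0 ∨ j < 0 ∨ k < 0) : sZ q e a b c i j k = 0 := by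
  rw [sZ, if_neg (by omega)]

theorem sZ_R {q : ℂ} (hq : ∀ k : ℕ, k ≠ 0 → q ^ k ≠ 1) {a c k : ℤ} {b i j : ℕ}
    (h1 : a + b = i + j) (h2 : b + c = j + k) (hc : -1 ≤ c) (hk : 0 ≤ k) :
    sZ q false a b c i j k = rs q i j b c k := by
  rcases lt_or_ge a 0 with ha | ha
  · rw [sZ_neg q _ (Or.inl ha), rs_of_lt _ _ _ (by omega)]
  rcases lt_or_ge c 0 with hc' | hc'
  · obtain rfl : c = -1 := by omega
    rw [sZ_neg q _ (by omega), rs_neg_one _ _ (by omega)]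
  lift a to ℕ using ha
  lift c to ℕ using hc'
  lift k to ℕ using hk
  rw [← R3_eq hq (a := a) (by omega) (by omega)]
  simp [sZ, Sg]

theorem sZ_R_pred_i {q : ℂ} (hq : ∀ k : ℕ, k ≠ 0 → q ^ k ≠ 1) {a c k : ℤ} {b i j : ℕ}
    (h1 : a + b + 1 = i + j) (h2 : b + c = j + k) (hc : -1 ≤ c) (hk : 0 ≤ k) :
    (1 - q ^ (2 * (i : ℤ))) * sZ q false a b c (i - 1) j k =
      (1 - q ^ (2 * (i : ℤ))) * rs q (i - 1) j b c k := by
  rcases i with _ | i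
  · simp
  · rw [← sZ_R hq (a := a) (by push_cast at h1 ⊢; omega) h2 hc hk]
    simp

theorem sZ_R_pred_j {q : ℂ} (hq : ∀ k : ℕ, k ≠ 0 → q ^ k ≠ 1) {a c k : ℤ} {b i j : ℕ}
    (h1 : a + b + 1 = i + j) (h2 : b + c + 1 = j + k) (hc : -1 ≤ c) (hk : 0 ≤ k) :
    (1 - q ^ (2 * (j : ℤ))) * sZ q false a b c i (j - 1) k =
      (1 - q ^ (2 * (j : ℤ))) * rs q i (j - 1) b c k := by
  rcases j with _ | j
  · simp
  · rw [← sZ_R hq (a := a) (by push_cast at h1 ⊢; omega) (by push_cast at h2 ⊢; omega) hc hk]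
    simp

/-- The occupation numbers at a site are nonnegative, and at most `1` at a fermionic site. -/
def inR (e : Bool) (a : ℤ) : Prop := 0 ≤ a ∧ (e = true → a ≤ 1)

/-! ### Intertwining relations at a single site

Relations 1 and 2 concern the left member of a pair of neighbouring sites, relations 3 and 4 the
right member; `c` is the label shared by the pair, whose value is `c` or `c + 1` according to the
term. At a bosonic site they are the contiguity relations above, rescaled by powers of `q`. At a
fermionic site the four occupation numbers are `0` or `1` and conservation fixes the difference of
the auxiliary labels, so that they are checked entry by entry. Relations 2 and 3 are also needed at
`c = -1`, where the factors `1 - q^{2(c+1)}` vanish. -/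

theorem site_e1 {q : ℂ} (hq0 : q ≠ 0) (hq : ∀ k : ℕ, k ≠ 0 → q ^ k ≠ 1) {e : Bool}
    {a b i j c f : ℤ} (ha : inR e a) (hb : inR e b) (hi : inR e i) (hj : inR e j)
    (hf : 0 ≤ f) (hc : 0 ≤ c) (h1 : a + b + 1 = i + j) (h2 : b + f = j + c) :
    qn q (a + 1) * sZ q e (a + 1) b f i j c =
      qn q j * sZ q e a b f i (j - 1) (c + 1) +
        q ^ c * (qe q e ^ (-j) * qn q i * sZ q e a b f (i - 1) j c) := by
  obtain ⟨ha0, ha⟩ := ha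
  obtain ⟨hb0, hb⟩ := hb
  obtain ⟨hi0, hi⟩ := hi
  obtain ⟨hj0, hj⟩ := hj
  cases e
  · lift b to ℕ using hb0
    lift i to ℕ using hi0
    lift j to ℕ using hj0
    have H := rs_e1 hq0 hq i j b f c (by omega)
    rw [← sZ_R hq (a := a + 1) (by omega) (by omega) (by omega) (by omega),
      ← sZ_R_pred_i hq (a := a) (by omega) (by omega) (by omega) (by omega),
      ← sZ_R_pred_j hq (a := a) (by omega) (by omega) (by omega) (by omega),
      show (i : ℤ) + j - b = a + 1 by omega] at H
    rw [qn_eq hq0, qn_eq hq0, qn_eq hq0]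
    have e1 : q ^ (-(a + 1)) * q ^ ((i : ℤ) - b) = q ^ (-(j : ℤ)) := by
      rw [← zpow_add₀ hq0]; congr 1; omega
    have e2 : q ^ (-(a + 1)) * q ^ (c - b) = q ^ c * q ^ (-(j : ℤ)) * q ^ (-(i : ℤ)) := by
      rw [← zpow_add₀ hq0, ← zpow_add₀ hq0, ← zpow_add₀ hq0]; congr 1; omega
    simp only [qe, Bool.false_eq_true, if_false]
    set κ := -1 / (q - q⁻¹)
    linear_combination (q ^ (-(a + 1)) * κ) * H +
      (κ * ((1 - q ^ (2 * (j : ℤ))) * sZ q false a b f i (j - 1) (c + 1))) * e1 +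
      (κ * ((1 - q ^ (2 * (i : ℤ))) * sZ q false a b f (i - 1) j c)) * e2
  · simp only [forall_const] at ha hb hi hj
    have := qn_one hq0 hq
    lift c to ℕ using hc
    lift f to ℕ using hf
    have hc1 : 0 ≤ (c : ℤ) + 1 := by omega
    have z1 : q ^ ((c : ℤ) + 1) = q ^ (c + 1) := by exact_mod_cast zpow_natCast q (c + 1)
    have z2 : q ^ (2 * ((c : ℤ) + 1)) = q ^ (2 * (c + 1)) := by
      exact_mod_cast zpow_natCast q (2 * (c + 1))
    have z3 : q ^ ((c : ℤ) + 2) = q ^ (c + 2) := by exact_mod_cast zpow_natCast q (c + 2)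
    simp only [z1, z2, z3, zpow_natCast]
    clear z1 z2 z3
    interval_cases a <;> interval_cases b <;> interval_cases i <;> interval_cases j <;>
      first
      | omega
      | (first
          | ((have hE : f = c := by omega); subst hE)
          | ((have hE : f = c + 1 := by omega); subst hE)
          | ((have hE : f = c + 2 := by omega); subst hE)
          | ((have hE : c = f + 1 := by omega); subst hE)) <;>
        (simp [sZ, Sg, L3, qn_zero, qe, hc1, hq0, this]) <;> (try field_simp) <;> ring_nf

theorem site_e2 {q : ℂ} (hq0 : q ≠ 0) (hq : ∀ k : ℕ, k ≠ 0 → q ^ k ≠ 1) {e : Bool}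
    {a b i j c f : ℤ} (ha : inR e a) (hb : inR e b) (hi : inR e i) (hj : inR e j)
    (hf : 0 ≤ f) (hc : -1 ≤ c) (h1 : a + b + 1 = i + j) (h2 : b + f = j + c) :
    qe q e ^ (-a) * qn q (b + 1) * sZ q e a (b + 1) f i j (c + 1) =
      (1 - q ^ (2 * (c + 1))) * (qe q e ^ (-j) * qn q i * sZ q e a b f (i - 1) j c) -
        q ^ (c + 2) * (qn q j * sZ q e a b f i (j - 1) (c + 1)) := by
  obtain ⟨ha0, ha⟩ := ha
  obtain ⟨hb0, hb⟩ := hb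
  obtain ⟨hi0, hi⟩ := hi
  obtain ⟨hj0, hj⟩ := hj
  cases e
  · lift b to ℕ using hb0
    lift i to ℕ using hi0
    lift j to ℕ using hj0
    have H := rs_e2 hq0 hq i j b f (c + 1) (by omega)
    -- at `c = -1` the prefactor of the entry with outer label `c` vanishes
    have H0 : (1 - q ^ (2 * (c + 1))) * ((1 - q ^ (2 * (i : ℤ))) * rs q (i - 1) j b f c) =
        (1 - q ^ (2 * (c + 1))) * ((1 - q ^ (2 * (i : ℤ))) * sZ q false a b f (i - 1) j c) := by
      rcases eq_or_lt_of_le hc with rfl | hc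
      · simp
      · rw [← sZ_R_pred_i hq (a := a) (by omega) (by omega) (by omega) (by omega)]
    rw [add_sub_cancel_right, H0, ← sZ_R hq (a := a) (b := b + 1) (by omega) (by omega) (by omega) (by omega),
      ← sZ_R_pred_j hq (a := a) (by omega) (by omega) (by omega) (by omega)] at H
    push_cast at H
    rw [qn_eq hq0, qn_eq hq0, qn_eq hq0]
    have e1 : q ^ (-a) * q ^ (-((b : ℤ) + 1)) = q ^ (-(j : ℤ)) * q ^ (-(i : ℤ)) := by
      rw [← zpow_add₀ hq0, ← zpow_add₀ hq0]; congr 1; omega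
    have e2 : q ^ (-(j : ℤ)) * q ^ (-(i : ℤ)) * q ^ (c + 1 + 1 + i) = q ^ (c + 2) * q ^ (-(j : ℤ)) := by
      rw [← zpow_add₀ hq0, ← zpow_add₀ hq0, ← zpow_add₀ hq0]; congr 1; omega
    simp only [qe, Bool.false_eq_true, if_false]
    set κ := -1 / (q - q⁻¹)
    linear_combination (q ^ (-(j : ℤ)) * q ^ (-(i : ℤ)) * κ) * H +
      (κ * ((1 - q ^ (2 * ((b : ℤ) + 1))) * sZ q false a (b + 1) f i j (c + 1))) * e1 -
      (κ * ((1 - q ^ (2 * (j : ℤ))) * sZ q false a b f i (j - 1) (c + 1))) * e2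
  · simp only [forall_const] at ha hb hi hj
    have := qn_one hq0 hq
    lift f to ℕ using hf
    rcases eq_or_lt_of_le hc with rfl | hc
    · interval_cases a <;> interval_cases b <;> interval_cases i <;> interval_cases j <;>
        first
        | omega
        | (first
            | ((have hE : f = 0 := by omega); subst hE)
            | ((have hE : f = 1 := by omega); subst hE)) <;>
          simp [sZ, Sg, L3, qn_zero, qe, hq0, this]
    · lift c to ℕ using (by omega)
      have hc1 : 0 ≤ (c : ℤ) + 1 := by omega
      have z1 : q ^ ((c : ℤ) + 1) = q ^ (c + 1) := by exact_mod_cast zpow_natCast q (c + 1)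
      have z2 : q ^ (2 * ((c : ℤ) + 1)) = q ^ (2 * (c + 1)) := by
        exact_mod_cast zpow_natCast q (2 * (c + 1))
      have z3 : q ^ ((c : ℤ) + 2) = q ^ (c + 2) := by exact_mod_cast zpow_natCast q (c + 2)
      simp only [z1, z2, z3, zpow_natCast]
      clear z1 z2 z3
      interval_cases a <;> interval_cases b <;> interval_cases i <;> interval_cases j <;>
        first
        | omega
        | (first
            | ((have hE : f = c := by omega); subst hE)
            | ((have hE : f = c + 1 := by omega); subst hE)
            | ((have hE : f = c + 2 := by omega); subst hE)
            | ((have hE : c = f + 1 := by omega); subst hE)) <;>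
          (simp [sZ, Sg, L3, qn_zero, qe, hc1, hq0, this]) <;> (try field_simp) <;> ring_nf

theorem site_e3 {q : ℂ} (hq0 : q ≠ 0) (hq : ∀ k : ℕ, k ≠ 0 → q ^ k ≠ 1) {e : Bool}
    {a b i j c f : ℤ} (ha : inR e a) (hb : inR e b) (hi : inR e i) (hj : inR e j)
    (hf : 0 ≤ f) (hc : -1 ≤ c) (h1 : a + b = i + j + 1) (h2 : b + c = j + f) :
    sZ q e a b (c + 1) i (j + 1) f =
      sZ q e (a - 1) b c i j f - q ^ (c + 2) * (qe q e ^ a * sZ q e a (b - 1) (c + 1) i j f) := by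
  obtain ⟨ha0, ha⟩ := ha
  obtain ⟨hb0, hb⟩ := hb
  obtain ⟨hi0, hi⟩ := hi
  obtain ⟨hj0, hj⟩ := hj
  cases e
  · lift b to ℕ using hb0
    lift i to ℕ using hi0
    lift j to ℕ using hj0
    rcases b with _ | b
    · have H := rs_e3_zero hq i j (c + 1) f
      rw [add_sub_cancel_right, ← sZ_R hq (a := a) (by omega) (by omega) (by omega) (by omega),
        ← sZ_R hq (a := a - 1) (by omega) (by omega) (by omega) (by omega)] at H
      rw [sZ_neg q _ (b := ((0 : ℕ) : ℤ) - 1) (by omega)]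
      push_cast at H ⊢
      rw [H]
      simp
    · have H := rs_e3 hq0 hq i j b (c + 1) f (by omega)
      rw [add_sub_cancel_right, ← sZ_R hq (a := a) (by omega) (by omega) (by omega) (by omega),
        ← sZ_R hq (a := a - 1) (by omega) (by omega) (by omega) (by omega),
        ← sZ_R hq (a := a) (by omega) (by omega) (by omega) (by omega),
        show c + 1 + i + j - b + 1 = c + 2 + a by omega, zpow_add₀ hq0] at H
      simp only [qe, Bool.false_eq_true, if_false]
      push_cast at H ⊢
      rw [H, add_sub_cancel_right]
      ring
  · simp only [forall_const] at ha hb hi hj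
    have := qn_one hq0 hq
    lift f to ℕ using hf
    rcases eq_or_lt_of_le hc with rfl | hc
    · interval_cases a <;> interval_cases b <;> interval_cases i <;> interval_cases j <;>
        first
        | omega
        | (first
            | ((have hE : f = 0 := by omega); subst hE)
            | ((have hE : f = 1 := by omega); subst hE)) <;>
          simp [sZ, Sg, L3, qn_zero, qe, hq0, this]
    · lift c to ℕ using (by omega)
      have hc1 : 0 ≤ (c : ℤ) + 1 := by omega
      have z1 : q ^ ((c : ℤ) + 1) = q ^ (c + 1) := by exact_mod_cast zpow_natCast q (c + 1)
      have z2 : q ^ (2 * ((c : ℤ) + 1)) = q ^ (2 * (c + 1)) := by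
        exact_mod_cast zpow_natCast q (2 * (c + 1))
      have z3 : q ^ ((c : ℤ) + 2) = q ^ (c + 2) := by exact_mod_cast zpow_natCast q (c + 2)
      simp only [z1, z2, z3, zpow_natCast]
      clear z1 z2 z3
      interval_cases a <;> interval_cases b <;> interval_cases i <;> interval_cases j <;>
        first
        | omega
        | (first
            | ((have hE : f = c := by omega); subst hE)
            | ((have hE : f = c + 1 := by omega); subst hE)
            | ((have hE : f = c + 2 := by omega); subst hE)
            | ((have hE : c = f + 1 := by omega); subst hE)) <;>
          (simp [sZ, Sg, L3, qn_zero, qe, hc1, hq0, this]) <;> (try field_simp) <;> ring_nf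

theorem site_e4 {q : ℂ} (hq0 : q ≠ 0) (hq : ∀ k : ℕ, k ≠ 0 → q ^ k ≠ 1) {e : Bool}
    {a b i j c f : ℤ} (ha : inR e a) (hb : inR e b) (hi : inR e i) (hj : inR e j)
    (hf : 0 ≤ f) (hc : 0 ≤ c) (h1 : a + b = i + j + 1) (h2 : b + c = j + f) :
    qe q e ^ j * sZ q e a b c (i + 1) j f =
      q ^ c * sZ q e (a - 1) b c i j f +
        (1 - q ^ (2 * (c + 1))) * (qe q e ^ a * sZ q e a (b - 1) (c + 1) i j f) := by
  obtain ⟨ha0, ha⟩ := ha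
  obtain ⟨hb0, hb⟩ := hb
  obtain ⟨hi0, hi⟩ := hi
  obtain ⟨hj0, hj⟩ := hj
  cases e
  · lift b to ℕ using hb0
    lift i to ℕ using hi0
    lift j to ℕ using hj0
    rcases b with _ | b
    · have H := rs_e4_zero hq0 hq i j c f
      rw [← sZ_R hq (a := a) (by omega) (by omega) (by omega) (by omega),
        ← sZ_R hq (a := a - 1) (by omega) (by omega) (by omega) (by omega)] at H
      rw [sZ_neg q _ (b := ((0 : ℕ) : ℤ) - 1) (by omega)]
      simp only [qe, Bool.false_eq_true, if_false]
      push_cast at H ⊢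
      rw [H]
      simp
    · have H := rs_e4 hq0 hq i j b c f (by omega)
      rw [← sZ_R hq (a := a) (by omega) (by omega) (by omega) (by omega),
        ← sZ_R hq (a := a - 1) (by omega) (by omega) (by omega) (by omega),
        ← sZ_R hq (a := a) (by omega) (by omega) (by omega) (by omega),
        show (i : ℤ) + j - b = a by omega] at H
      simp only [qe, Bool.false_eq_true, if_false]
      push_cast at H ⊢
      rw [H, add_sub_cancel_right]
      ring
  · simp only [forall_const] at ha hb hi hj
    have := qn_one hq0 hq
    lift c to ℕ using hc
    lift f to ℕ using hf
    have hc1 : 0 ≤ (c : ℤ) + 1 := by omega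
    have z1 : q ^ ((c : ℤ) + 1) = q ^ (c + 1) := by exact_mod_cast zpow_natCast q (c + 1)
    have z2 : q ^ (2 * ((c : ℤ) + 1)) = q ^ (2 * (c + 1)) := by
      exact_mod_cast zpow_natCast q (2 * (c + 1))
    have z3 : q ^ ((c : ℤ) + 2) = q ^ (c + 2) := by exact_mod_cast zpow_natCast q (c + 2)
    simp only [z1, z2, z3, zpow_natCast]
    clear z1 z2 z3
    interval_cases a <;> interval_cases b <;> interval_cases i <;> interval_cases j <;>
      first
      | omega
      | (first
          | ((have hE : f = c := by omega); subst hE)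
          | ((have hE : f = c + 1 := by omega); subst hE)
          | ((have hE : f = c + 2 := by omega); subst hE)
          | ((have hE : c = f + 1 := by omega); subst hE)) <;>
        (simp [sZ, Sg, L3, qn_zero, qe, hc1, hq0, this]) <;> (try field_simp) <;> ring_nf

theorem site_f1 {q : ℂ} (hq0 : q ≠ 0) (hq : ∀ k : ℕ, k ≠ 0 → q ^ k ≠ 1) {e : Bool}
    {a b i j c f : ℤ} (ha : inR e a) (hb : inR e b) (hi : inR e i) (hj : inR e j)
    (hf : 0 ≤ f) (hc : 0 ≤ c) (h1 : a + b = i + j + 1) (h2 : b + f = j + c + 1) :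
    sZ q e a (b - 1) f i j c =
      sZ q e a b f (i + 1) j (c + 1) - q ^ (c + 1) * (qe q e ^ i * sZ q e a b f i (j + 1) c) := by
  obtain ⟨ha0, ha⟩ := ha
  obtain ⟨hb0, hb⟩ := hb
  obtain ⟨hi0, hi⟩ := hi
  obtain ⟨hj0, hj⟩ := hj
  cases e
  · lift b to ℕ using hb0
    lift i to ℕ using hi0
    lift j to ℕ using hj0
    rcases b with _ | b
    · have H := rs_f1_zero hq0 hq i j f (c + 1) (by omega)
      rw [add_sub_cancel_right, ← sZ_R hq (a := a) (by omega) (by omega) (by omega) (by omega),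
        ← sZ_R hq (a := a) (by omega) (by omega) (by omega) (by omega), zpow_add₀ hq0 (c + 1)] at H
      rw [sZ_neg q _ (b := ((0 : ℕ) : ℤ) - 1) (by omega)]
      simp only [qe, Bool.false_eq_true, if_false]
      push_cast at H ⊢
      rw [H]
      ring
    · have H := rs_f1 hq0 hq i j b f (c + 1) (by omega)
      rw [add_sub_cancel_right, ← sZ_R hq (a := a) (by omega) (by omega) (by omega) (by omega),
        ← sZ_R hq (a := a) (by omega) (by omega) (by omega) (by omega),
        ← sZ_R hq (a := a) (by omega) (by omega) (by omega) (by omega), zpow_add₀ hq0 (c + 1)] at H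
      simp only [qe, Bool.false_eq_true, if_false]
      push_cast at H ⊢
      rw [add_sub_cancel_right, H]
      ring
  · simp only [forall_const] at ha hb hi hj
    have := qn_one hq0 hq
    lift c to ℕ using hc
    lift f to ℕ using hf
    have hc1 : 0 ≤ (c : ℤ) + 1 := by omega
    have z1 : q ^ ((c : ℤ) + 1) = q ^ (c + 1) := by exact_mod_cast zpow_natCast q (c + 1)
    have z2 : q ^ (2 * ((c : ℤ) + 1)) = q ^ (2 * (c + 1)) := by
      exact_mod_cast zpow_natCast q (2 * (c + 1))
    have z3 : q ^ ((c : ℤ) + 2) = q ^ (c + 2) := by exact_mod_cast zpow_natCast q (c + 2)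
    simp only [z1, z2, z3, zpow_natCast]
    clear z1 z2 z3
    interval_cases a <;> interval_cases b <;> interval_cases i <;> interval_cases j <;>
      first
      | omega
      | (first
          | ((have hE : f = c := by omega); subst hE)
          | ((have hE : f = c + 1 := by omega); subst hE)
          | ((have hE : f = c + 2 := by omega); subst hE)
          | ((have hE : c = f + 1 := by omega); subst hE)) <;>
        (simp [sZ, Sg, L3, qn_zero, qe, hc1, hq0, this]) <;> (try field_simp) <;> ring_nf

theorem site_f2 {q : ℂ} (hq0 : q ≠ 0) (hq : ∀ k : ℕ, k ≠ 0 → q ^ k ≠ 1) {e : Bool}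
    {a b i j c f : ℤ} (ha : inR e a) (hb : inR e b) (hi : inR e i) (hj : inR e j)
    (hf : 0 ≤ f) (hc : -1 ≤ c) (h1 : a + b = i + j + 1) (h2 : b + f = j + c + 1) :
    qe q e ^ b * sZ q e (a - 1) b f i j (c + 1) =
      q ^ (c + 1) * sZ q e a b f (i + 1) j (c + 1) +
        (1 - q ^ (2 * (c + 1))) * (qe q e ^ i * sZ q e a b f i (j + 1) c) := by
  obtain ⟨ha0, ha⟩ := ha
  obtain ⟨hb0, hb⟩ := hb
  obtain ⟨hi0, hi⟩ := hi
  obtain ⟨hj0, hj⟩ := hj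
  cases e
  · lift b to ℕ using hb0
    lift i to ℕ using hi0
    lift j to ℕ using hj0
    have H := rs_f2 hq0 hq i j b f (c + 1) (by omega)
    -- at `c = -1` the prefactor of the entry with outer label `c` vanishes
    have H0 : (1 - q ^ (2 * (c + 1))) * q ^ (i : ℤ) * rs q i (j + 1) b f c =
        (1 - q ^ (2 * (c + 1))) * q ^ (i : ℤ) * sZ q false a b f i (j + 1) c := by
      rcases eq_or_lt_of_le hc with rfl | hc
      · simp
      · rw [← sZ_R hq (a := a) (by omega) (by omega) (by omega) (by omega)]; simp
    rw [add_sub_cancel_right, H0, ← sZ_R hq (a := a - 1) (by omega) (by omega) (by omega) (by omega),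
      ← sZ_R hq (a := a) (by omega) (by omega) (by omega) (by omega)] at H
    simp only [qe, Bool.false_eq_true, if_false]
    push_cast at H
    linear_combination H
  · simp only [forall_const] at ha hb hi hj
    have := qn_one hq0 hq
    lift f to ℕ using hf
    rcases eq_or_lt_of_le hc with rfl | hc
    · interval_cases a <;> interval_cases b <;> interval_cases i <;> interval_cases j <;>
        first
        | omega
        | (first
            | ((have hE : f = 0 := by omega); subst hE)
            | ((have hE : f = 1 := by omega); subst hE)) <;>
          simp [sZ, Sg, L3, qn_zero, qe, hq0, this]
    · lift c to ℕ using (by omega)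
      have hc1 : 0 ≤ (c : ℤ) + 1 := by omega
      have z1 : q ^ ((c : ℤ) + 1) = q ^ (c + 1) := by exact_mod_cast zpow_natCast q (c + 1)
      have z2 : q ^ (2 * ((c : ℤ) + 1)) = q ^ (2 * (c + 1)) := by
        exact_mod_cast zpow_natCast q (2 * (c + 1))
      have z3 : q ^ ((c : ℤ) + 2) = q ^ (c + 2) := by exact_mod_cast zpow_natCast q (c + 2)
      simp only [z1, z2, z3, zpow_natCast]
      clear z1 z2 z3
      interval_cases a <;> interval_cases b <;> interval_cases i <;> interval_cases j <;>
        first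
        | omega
        | (first
            | ((have hE : f = c := by omega); subst hE)
            | ((have hE : f = c + 1 := by omega); subst hE)
            | ((have hE : f = c + 2 := by omega); subst hE)
            | ((have hE : c = f + 1 := by omega); subst hE)) <;>
          (simp [sZ, Sg, L3, qn_zero, qe, hc1, hq0, this]) <;> (try field_simp) <;> ring_nf

theorem site_f3 {q : ℂ} (hq0 : q ≠ 0) (hq : ∀ k : ℕ, k ≠ 0 → q ^ k ≠ 1) {e : Bool}
    {a b i j c f : ℤ} (ha : inR e a) (hb : inR e b) (hi : inR e i) (hj : inR e j)
    (hf : 0 ≤ f) (hc : -1 ≤ c) (h1 : a + b + 1 = i + j) (h2 : b + 1 + c = j + f) :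
    qn q i * sZ q e a b (c + 1) (i - 1) j f =
      qn q (b + 1) * sZ q e a (b + 1) c i j f +
        q ^ (c + 1) * (qe q e ^ (-b) * qn q (a + 1) * sZ q e (a + 1) b (c + 1) i j f) := by
  obtain ⟨ha0, ha⟩ := ha
  obtain ⟨hb0, hb⟩ := hb
  obtain ⟨hi0, hi⟩ := hi
  obtain ⟨hj0, hj⟩ := hj
  cases e
  · lift b to ℕ using hb0
    lift i to ℕ using hi0
    lift j to ℕ using hj0
    have H := rs_f3 hq0 hq i j b (c + 1) f (by omega)
    rw [add_sub_cancel_right, ← sZ_R_pred_i hq (a := a) (by omega) (by omega) (by omega) (by omega),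
      ← sZ_R hq (a := a + 1) (by omega) (by omega) (by omega) (by omega),
      ← sZ_R hq (a := a) (by omega) (by omega) (by omega) (by omega),
      show (i : ℤ) + j - b = a + 1 by omega, add_sub_cancel_right] at H
    push_cast at H
    rw [qn_eq hq0, qn_eq hq0, qn_eq hq0]
    have e1 : q ^ (-(i : ℤ)) = q ^ (-(a + 1)) * q ^ (-(b : ℤ)) * q ^ (j : ℤ) := by
      rw [← zpow_add₀ hq0, ← zpow_add₀ hq0]; congr 1; omega
    have e2 : q ^ (-(a + 1)) * q ^ (-(b : ℤ)) * q ^ a = q ^ (-((b : ℤ) + 1)) := by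
      rw [← zpow_add₀ hq0, ← zpow_add₀ hq0]; congr 1; omega
    simp only [qe, Bool.false_eq_true, if_false]
    set κ := -1 / (q - q⁻¹)
    linear_combination (q ^ (-(a + 1)) * q ^ (-(b : ℤ)) * κ) * H +
      (κ * ((1 - q ^ (2 * (i : ℤ))) * sZ q false a b (c + 1) (i - 1) j f)) * e1 +
      (κ * ((1 - q ^ (2 * ((b : ℤ) + 1))) * sZ q false a (b + 1) c i j f)) * e2
  · simp only [forall_const] at ha hb hi hj
    have := qn_one hq0 hq
    lift f to ℕ using hf
    rcases eq_or_lt_of_le hc with rfl | hc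
    · interval_cases a <;> interval_cases b <;> interval_cases i <;> interval_cases j <;>
        first
        | omega
        | (first
            | ((have hE : f = 0 := by omega); subst hE)
            | ((have hE : f = 1 := by omega); subst hE)) <;>
          simp [sZ, Sg, L3, qn_zero, qe, hq0, this]
    · lift c to ℕ using (by omega)
      have hc1 : 0 ≤ (c : ℤ) + 1 := by omega
      have z1 : q ^ ((c : ℤ) + 1) = q ^ (c + 1) := by exact_mod_cast zpow_natCast q (c + 1)
      have z2 : q ^ (2 * ((c : ℤ) + 1)) = q ^ (2 * (c + 1)) := by
        exact_mod_cast zpow_natCast q (2 * (c + 1))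
      have z3 : q ^ ((c : ℤ) + 2) = q ^ (c + 2) := by exact_mod_cast zpow_natCast q (c + 2)
      simp only [z1, z2, z3, zpow_natCast]
      clear z1 z2 z3
      interval_cases a <;> interval_cases b <;> interval_cases i <;> interval_cases j <;>
        first
        | omega
        | (first
            | ((have hE : f = c := by omega); subst hE)
            | ((have hE : f = c + 1 := by omega); subst hE)
            | ((have hE : f = c + 2 := by omega); subst hE)
            | ((have hE : c = f + 1 := by omega); subst hE)) <;>
          (simp [sZ, Sg, L3, qn_zero, qe, hc1, hq0, this]) <;> (try field_simp) <;> ring_nf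

theorem site_f4 {q : ℂ} (hq0 : q ≠ 0) (hq : ∀ k : ℕ, k ≠ 0 → q ^ k ≠ 1) {e : Bool}
    {a b i j c f : ℤ} (ha : inR e a) (hb : inR e b) (hi : inR e i) (hj : inR e j)
    (hf : 0 ≤ f) (hc : 0 ≤ c) (h1 : a + b + 1 = i + j) (h2 : b + 1 + c = j + f) :
    qe q e ^ (-i) * qn q j * sZ q e a b c i (j - 1) f =
      -(q ^ (c + 1) * (qn q (b + 1) * sZ q e a (b + 1) c i j f)) +
        (1 - q ^ (2 * (c + 1))) *
          (qe q e ^ (-b) * qn q (a + 1) * sZ q e (a + 1) b (c + 1) i j f) := by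
  obtain ⟨ha0, ha⟩ := ha
  obtain ⟨hb0, hb⟩ := hb
  obtain ⟨hi0, hi⟩ := hi
  obtain ⟨hj0, hj⟩ := hj
  cases e
  · lift b to ℕ using hb0
    lift i to ℕ using hi0
    lift j to ℕ using hj0
    have H := rs_f4 hq0 hq i j b c f (by omega)
    rw [← sZ_R_pred_j hq (a := a) (by omega) (by omega) (by omega) (by omega),
      ← sZ_R hq (a := a) (by omega) (by omega) (by omega) (by omega),
      ← sZ_R hq (a := a + 1) (by omega) (by omega) (by omega) (by omega),
      show (i : ℤ) + j - b = a + 1 by omega] at H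
    push_cast at H
    rw [qn_eq hq0, qn_eq hq0, qn_eq hq0]
    have e1 : q ^ (-(i : ℤ)) * q ^ (-(j : ℤ)) = q ^ (-(a + 1)) * q ^ (-(b : ℤ)) := by
      rw [← zpow_add₀ hq0, ← zpow_add₀ hq0]; congr 1; omega
    have e2 : q ^ (-(a + 1)) * q ^ (-(b : ℤ)) * q ^ (c + i + j - b) = q ^ (c + 1) * q ^ (-((b : ℤ) + 1)) := by
      rw [← zpow_add₀ hq0, ← zpow_add₀ hq0, ← zpow_add₀ hq0]; congr 1; omega
    simp only [qe, Bool.false_eq_true, if_false]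
    set κ := -1 / (q - q⁻¹)
    linear_combination (q ^ (-(a + 1)) * q ^ (-(b : ℤ)) * κ) * H +
      (κ * ((1 - q ^ (2 * (j : ℤ))) * sZ q false a b c i (j - 1) f)) * e1 -
      (κ * ((1 - q ^ (2 * ((b : ℤ) + 1))) * sZ q false a (b + 1) c i j f)) * e2
  · simp only [forall_const] at ha hb hi hj
    have := qn_one hq0 hq
    lift c to ℕ using hc
    lift f to ℕ using hf
    have hc1 : 0 ≤ (c : ℤ) + 1 := by omega
    have z1 : q ^ ((c : ℤ) + 1) = q ^ (c + 1) := by exact_mod_cast zpow_natCast q (c + 1)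
    have z2 : q ^ (2 * ((c : ℤ) + 1)) = q ^ (2 * (c + 1)) := by
      exact_mod_cast zpow_natCast q (2 * (c + 1))
    have z3 : q ^ ((c : ℤ) + 2) = q ^ (c + 2) := by exact_mod_cast zpow_natCast q (c + 2)
    simp only [z1, z2, z3, zpow_natCast]
    clear z1 z2 z3
    interval_cases a <;> interval_cases b <;> interval_cases i <;> interval_cases j <;>
      first
      | omega
      | (first
          | ((have hE : f = c := by omega); subst hE)
          | ((have hE : f = c + 1 := by omega); subst hE)
          | ((have hE : f = c + 2 := by omega); subst hE)
          | ((have hE : c = f + 1 := by omega); subst hE)) <;>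
        (simp [sZ, Sg, L3, qn_zero, qe, hc1, hq0, this]) <;> (try field_simp) <;> ring_nf

/-! ### Intertwining relations for two neighbouring sites -/

/-- The relation for `e` on two neighbouring sites; `c` is the label shared by the sites. Each
side is a combination of the products `P₃Q₁, P₃Q₂, P₄Q₁, P₄Q₂`, with the same coefficients. -/
theorem pair_e {q : ℂ} (hq0 : q ≠ 0) (hq : ∀ k : ℕ, k ≠ 0 → q ^ k ≠ 1) {e e' : Bool}
    {a b i j a' b' i' j' : ℤ} (c f g : ℤ) (ha : inR e a) (hb : inR e b) (hi : inR e i)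
    (hj : inR e j) (ha' : inR e' a') (hb' : inR e' b') (hi' : inR e' i') (hj' : inR e' j')
    (h1 : a + b + 1 = i + j) (h2 : b + f = j + c)
    (h1' : a' + b' = i' + j' + 1) (h2' : b' + c = j' + g) :
    qn q (a + 1) * (sZ q e (a + 1) b f i j c * sZ q e' (a' - 1) b' c i' j' g) +
      qe q e ^ (-a) * qe q e' ^ a' * qn q (b + 1) *
        (sZ q e a (b + 1) f i j (c + 1) * sZ q e' a' (b' - 1) (c + 1) i' j' g) =
    qn q j * (sZ q e a b f i (j - 1) (c + 1) * sZ q e' a' b' (c + 1) i' (j' + 1) g) +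
      qn q i * (qe q e ^ (-j) * qe q e' ^ j') *
        (sZ q e a b f (i - 1) j c * sZ q e' a' b' c (i' + 1) j' g) := by
  rcases lt_or_ge f 0 with hf | hf
  · simp [sZ_neg q e (c := f), hf]
  rcases lt_or_ge g 0 with hg | hg
  · simp [sZ_neg q e' (k := g), hg]
  rcases lt_trichotomy c (-1) with hc | rfl | hc
  · rw [sZ_neg q e (k := c) (by omega), sZ_neg q e (k := c + 1) (by omega),
      sZ_neg q e (k := c + 1) (by omega), sZ_neg q e (k := c) (by omega)]
    ring
  · have P2 := site_e2 hq0 hq ha hb hi hj hf le_rfl h1 h2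
    have Q3 := site_e3 hq0 hq ha' hb' hi' hj' hg le_rfl h1' h2'
    rw [sZ_neg q e' (c := -1) (by omega)] at Q3
    rw [sZ_neg q e (k := -1) (by omega), sZ_neg q e (k := -1) (by omega), Q3]
    rw [show (-1 : ℤ) + 1 = 0 by norm_num, show (-1 : ℤ) + 2 = 1 by norm_num, mul_zero,
      zpow_zero, zpow_one] at P2
    rw [show (-1 : ℤ) + 1 = 0 by norm_num, show (-1 : ℤ) + 2 = 1 by norm_num, zpow_one]
    linear_combination (qe q e' ^ a' * sZ q e' a' (b' - 1) 0 i' j' g) * P2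
  · have P1 := site_e1 hq0 hq ha hb hi hj hf (by omega) h1 h2
    have P2 := site_e2 hq0 hq ha hb hi hj hf hc.le h1 h2
    have Q3 := site_e3 hq0 hq ha' hb' hi' hj' hg hc.le h1' h2'
    have Q4 := site_e4 hq0 hq ha' hb' hi' hj' hg (by omega) h1' h2'
    linear_combination sZ q e' (a' - 1) b' c i' j' g * P1 +
      (qe q e' ^ a' * sZ q e' a' (b' - 1) (c + 1) i' j' g) * P2 -
      (qn q j * sZ q e a b f i (j - 1) (c + 1)) * Q3 -
      (qe q e ^ (-j) * qn q i * sZ q e a b f (i - 1) j c) * Q4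

/-- The relation for `f` on two neighbouring sites. -/
theorem pair_f {q : ℂ} (hq0 : q ≠ 0) (hq : ∀ k : ℕ, k ≠ 0 → q ^ k ≠ 1) {e e' : Bool}
    {a b i j a' b' i' j' : ℤ} (c f g : ℤ) (ha : inR e a) (hb : inR e b) (hi : inR e i)
    (hj : inR e j) (ha' : inR e' a') (hb' : inR e' b') (hi' : inR e' i') (hj' : inR e' j')
    (h1 : a + b = i + j + 1) (h2 : b + f = j + c + 1)
    (h1' : a' + b' + 1 = i' + j') (h2' : b' + 1 + c = j' + g) :
    qn q (b' + 1) * (sZ q e a (b - 1) f i j c * sZ q e' a' (b' + 1) c i' j' g) +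
      qn q (a' + 1) * (qe q e ^ b * qe q e' ^ (-b')) *
        (sZ q e (a - 1) b f i j (c + 1) * sZ q e' (a' + 1) b' (c + 1) i' j' g) =
    qn q i' * (sZ q e a b f (i + 1) j (c + 1) * sZ q e' a' b' (c + 1) (i' - 1) j' g) +
      qe q e ^ i * qe q e' ^ (-i') * qn q j' *
        (sZ q e a b f i (j + 1) c * sZ q e' a' b' c i' (j' - 1) g) := by
  rcases lt_or_ge f 0 with hf | hf
  · simp [sZ_neg q e (c := f), hf]
  rcases lt_or_ge g 0 with hg | hg
  · simp [sZ_neg q e' (k := g), hg]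
  rcases lt_trichotomy c (-1) with hc | rfl | hc
  · rw [sZ_neg q e (k := c) (by omega), sZ_neg q e (k := c + 1) (by omega),
      sZ_neg q e (k := c + 1) (by omega), sZ_neg q e (k := c) (by omega)]
    ring
  · have P2 := site_f2 hq0 hq ha hb hi hj hf le_rfl h1 h2
    have Q3 := site_f3 hq0 hq ha' hb' hi' hj' hg le_rfl h1' h2'
    rw [sZ_neg q e' (c := -1) (by omega)] at Q3
    rw [sZ_neg q e (k := -1) (by omega), sZ_neg q e (k := -1) (by omega)]
    rw [show (-1 : ℤ) + 1 = 0 by norm_num, mul_zero, zpow_zero] at P2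
    rw [show (-1 : ℤ) + 1 = 0 by norm_num, zpow_zero] at Q3
    rw [show (-1 : ℤ) + 1 = 0 by norm_num]
    linear_combination (qe q e' ^ (-b') * qn q (a' + 1) * sZ q e' (a' + 1) b' 0 i' j' g) * P2 -
      sZ q e a b f (i + 1) j 0 * Q3
  · have P1 := site_f1 hq0 hq ha hb hi hj hf (by omega) h1 h2
    have P2 := site_f2 hq0 hq ha hb hi hj hf hc.le h1 h2
    have Q3 := site_f3 hq0 hq ha' hb' hi' hj' hg hc.le h1' h2'
    have Q4 := site_f4 hq0 hq ha' hb' hi' hj' hg (by omega) h1' h2'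
    linear_combination (qn q (b' + 1) * sZ q e' a' (b' + 1) c i' j' g) * P1 +
      (qe q e' ^ (-b') * qn q (a' + 1) * sZ q e' (a' + 1) b' (c + 1) i' j' g) * P2 -
      sZ q e a b f (i + 1) j (c + 1) * Q3 - (qe q e ^ i * sZ q e a b f i (j + 1) c) * Q4

/-! ### The trace as a single product -/

/-- Conservation laws and ranges of a nonzero local weight. -/
theorem Sg_ne {q : ℂ} {e : Bool} {a b c i j k : ℕ} (h : Sg q e a b c i j k ≠ 0) :
    a + b = i + j ∧ b + c = j + k ∧ (e = true → a ≤ 1 ∧ b ≤ 1 ∧ i ≤ 1 ∧ j ≤ 1) := by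
  cases e
  · have h' : ¬ ¬ (a + b = i + j ∧ b + c = j + k) := fun h' => h (by simp [Sg, R3, h'])
    have := not_not.mp h'
    exact ⟨this.1, this.2, by simp⟩
  · simp only [Sg, if_true, L3] at h
    split_ifs at h <;> simp_all <;> omega

section
variable {n : ℕ} [NeZero n]

/-- The matrix element `S₀(z)^{a,b}_{i,j}`, zero if a label is negative. -/
def tz (q : ℂ) (ε : Fin n → Bool) (a b i j : Fin n → ℤ) : K :=
  if ∀ t, 0 ≤ a t ∧ 0 ≤ b t ∧ 0 ≤ i t ∧ 0 ≤ j t then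
    mkS (trCoef q ε (fun t => (a t).toNat) (fun t => (b t).toNat) (fun t => (i t).toNat)
      (fun t => (j t).toNat))
  else 0

theorem mkS_coeff_nat (f : ℕ → ℂ) (N : ℕ) : (mkS f).coeff (N : ℤ) = f N := by
  rw [mkS, HahnSeries.ofPowerSeries_apply_coeff, PowerSeries.coeff_mk]

theorem mkS_coeff_neg (f : ℕ → ℂ) {N : ℤ} (h : N < 0) : (mkS f).coeff N = 0 := by
  rw [mkS, HahnSeries.ofPowerSeries_apply]
  refine HahnSeries.embDomain_of_notMem_range ?_
  rintro ⟨m, rfl⟩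
  simp at h
  omega

theorem fin_succ_val (k : ℕ) (h : k + 1 < n) :
    (⟨k, Nat.lt_of_succ_lt h⟩ : Fin n) + 1 = ⟨k + 1, h⟩ := by
  ext
  rw [Fin.val_add, Fin.val_one', Nat.mod_eq_of_lt (show 1 < n by omega), Nat.mod_eq_of_lt h]

/-- The conservation law determines all auxiliary labels from the one at the cut. -/
theorem cyc_unique {C C' : Fin n → ℤ} {b j : Fin n → ℤ} (h0 : C 0 = C' 0)
    (hC : ∀ t, b t + C t = j t + C (t + 1)) (hC' : ∀ t, b t + C' t = j t + C' (t + 1)) :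
    C = C' := by
  have : ∀ (k : ℕ) (h : k < n), C ⟨k, h⟩ = C' ⟨k, h⟩ := by
    intro k
    induction k with
    | zero => intro h; exact h0
    | succ k ih =>
      intro h
      have h1 := hC ⟨k, Nat.lt_of_succ_lt h⟩
      have h2 := hC' ⟨k, Nat.lt_of_succ_lt h⟩
      have := ih (Nat.lt_of_succ_lt h)
      rw [fin_succ_val k h] at h1 h2
      omega
  funext t
  exact this t t.2

/-- A conserved profile of auxiliary labels with a prescribed initial value exists as soon as the
total charges agree. -/
theorem cyc_exists {b j : Fin n → ℤ} (h : ∑ t, b t = ∑ t, j t) (N : ℤ) :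
    ∃ C : Fin n → ℤ, C 0 = N ∧ ∀ t, b t + C t = j t + C (t + 1) := by
  let F : ℕ → ℤ := fun k => N + ∑ s ∈ Finset.range k, (if h : s < n then b ⟨s, h⟩ - j ⟨s, h⟩ else 0)
  have hF : ∀ (k : ℕ) (h : k < n), F (k + 1) = F k + (b ⟨k, h⟩ - j ⟨k, h⟩) := by
    intro k h
    simp only [F, Finset.sum_range_succ, dif_pos h]
    ring
  have hn : F n = N := by
    have : ∑ s ∈ Finset.range n, (if h : s < n then b ⟨s, h⟩ - j ⟨s, h⟩ else 0) = 0 := by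
      rw [Finset.sum_range]
      simp [h]
    simp only [F, this, add_zero]
  refine ⟨fun t => F t, by simp [F], fun t => ?_⟩
  have h1 := hF t t.2
  rcases Nat.lt_or_ge ((t : ℕ) + 1) n with h2 | h2
  · have := fin_succ_val t h2
    simp only [Fin.eta] at this
    rw [this]
    simp only [Fin.eta] at h1
    dsimp only
    omega
  · have h3 : t + 1 = 0 := by
      ext
      rw [Fin.val_add, Fin.val_one', Nat.add_mod_mod, show (t : ℕ) + 1 = n by omega]
      simp
    have h4 : F ((0 : Fin n) : ℕ) = N := by simp [F]
    dsimp only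
    rw [h3, h4, ← hn]
    simp only [Fin.eta] at h1
    rw [show (t : ℕ) + 1 = n by omega] at h1
    omega

/-- Conservation of the auxiliary labels leaves at most one term in every coefficient of the
trace. -/
theorem tz_coeff (q : ℂ) (ε : Fin n → Bool) {a b i j C : Fin n → ℤ}
    (hC : ∀ t, b t + C t = j t + C (t + 1)) {N : ℤ} (hN : C 0 = N) :
    (tz q ε a b i j).coeff N =
      ∏ t, sZ q (ε t) (a t) (b t) (C t) (i t) (j t) (C (t + 1)) := by
  subst hN
  rw [tz]
  split_ifs with h
  swap
  · push Not at h
    obtain ⟨t, ht⟩ := h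
    symm
    rw [HahnSeries.coeff_zero]
    refine Finset.prod_eq_zero (Finset.mem_univ t) (sZ_neg _ _ ?_)
    by_contra hh
    push Not at hh
    have := ht hh.1 hh.2.1 hh.2.2.2.1
    omega
  lift a to Fin n → ℕ using fun t => (h t).1
  lift b to Fin n → ℕ using fun t => (h t).2.1
  lift i to Fin n → ℕ using fun t => (h t).2.2.1
  lift j to Fin n → ℕ using fun t => (h t).2.2.2
  simp only [Int.toNat_natCast]
  rcases lt_or_ge (C 0) 0 with h0 | h0
  · rw [mkS_coeff_neg _ h0]
    exact (Finset.prod_eq_zero (Finset.mem_univ (0 : Fin n))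
      (sZ_neg _ _ (Or.inr (Or.inr (Or.inl h0))))).symm
  have key : ∀ c : Fin n → ℕ, (c 0 : ℤ) = C 0 →
      ∏ t, Sg q (ε t) (a t) (b t) (c t) (i t) (j t) (c (t + 1)) ≠ 0 → ∀ t, (c t : ℤ) = C t := by
    intro c hc0 hp t
    refine congrFun (cyc_unique (C := fun t => (c t : ℤ)) hc0 (fun t => ?_) hC) t
    have := (Sg_ne (Finset.prod_ne_zero_iff.mp hp t (Finset.mem_univ t))).2.1
    exact_mod_cast this
  have hN : C 0 = ((C 0).toNat : ℤ) := by omega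
  rw [hN, mkS_coeff_nat, trCoef]
  by_cases hpos : ∀ t, 0 ≤ C t
  · lift C to Fin n → ℕ using hpos
    rw [finsum_eq_single _ C]
    · simp [sZ]
    · intro c hc
      split_ifs with hc0
      · by_contra hp
        exact hc (funext fun t => Int.natCast_inj.mp (key c (by simpa using hc0) hp t))
      · rfl
  · push Not at hpos
    obtain ⟨s, hs⟩ := hpos
    rw [Finset.prod_eq_zero (Finset.mem_univ s) (sZ_neg _ _ (by omega))]
    refine finsum_eq_zero_of_forall_eq_zero fun c => ?_
    split_ifs with hc0
    · by_contra hp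
      have := key c (by omega) hp s
      omega
    · rfl

/-- A matrix element vanishes if no auxiliary labels satisfy the conservation laws. -/
theorem tz_zero_of (q : ℂ) (ε : Fin n → Bool) {a b i j : Fin n → ℤ}
    (h : ∀ c : Fin n → ℕ, (∀ t, 0 ≤ a t ∧ 0 ≤ b t ∧ 0 ≤ i t ∧ 0 ≤ j t ∧ a t + b t = i t + j t ∧
      b t + c t = j t + c (t + 1) ∧
      (ε t = true → a t ≤ 1 ∧ b t ≤ 1 ∧ i t ≤ 1 ∧ j t ≤ 1)) → False) :
    tz q ε a b i j = 0 := by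
  rw [tz]
  split_ifs with h0
  swap
  · rfl
  lift a to Fin n → ℕ using fun t => (h0 t).1
  lift b to Fin n → ℕ using fun t => (h0 t).2.1
  lift i to Fin n → ℕ using fun t => (h0 t).2.2.1
  lift j to Fin n → ℕ using fun t => (h0 t).2.2.2
  simp only [Int.toNat_natCast]
  have : trCoef q ε a b i j = 0 := by
    funext N
    refine finsum_eq_zero_of_forall_eq_zero fun c => ?_
    split_ifs
    · by_contra hp
      refine h c fun t => ?_
      have := Sg_ne (Finset.prod_ne_zero_iff.mp hp t (Finset.mem_univ t))
      dsimp only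
      refine ⟨by omega, by omega, by omega, by omega, by omega, by omega, fun ht => ?_⟩
      have := this.2.2 ht
      omega
    · rfl
  rw [this]
  ext N
  rcases lt_or_ge N 0 with hN | hN
  · rw [mkS_coeff_neg _ hN]; rfl
  · lift N to ℕ using hN
    rw [mkS_coeff_nat]; rfl

theorem tz_zero_site (q : ℂ) (ε : Fin n → Bool) {a b i j : Fin n → ℤ} (t : Fin n)
    (h : a t + b t ≠ i t + j t) : tz q ε a b i j = 0 :=
  tz_zero_of q ε fun _ hc => h (hc t).2.2.2.2.1

/-- Summing the conservation law `b t + c t = j t + c (t + 1)` around the cycle cancels the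
auxiliary labels. -/
theorem tz_zero_sum (q : ℂ) (ε : Fin n → Bool) {a b i j : Fin n → ℤ}
    (h : ∑ t, b t ≠ ∑ t, j t) : tz q ε a b i j = 0 := by
  refine tz_zero_of q ε fun c hc => h ?_
  have h1 : ∑ t, (b t + c t) = ∑ t, (j t + c (t + 1)) :=
    Finset.sum_congr rfl fun t _ => (hc t).2.2.2.2.2.1
  have h2 := Equiv.sum_comp (Equiv.addRight (1 : Fin n)) fun t => (c t : ℤ)
  simp only [Equiv.coe_addRight] at h2
  rw [Finset.sum_add_distrib, Finset.sum_add_distrib] at h1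
  linarith

theorem tz_zero_range (q : ℂ) (ε : Fin n → Bool) {a b i j : Fin n → ℤ} (t : Fin n)
    (h : ¬ inR (ε t) (a t) ∨ ¬ inR (ε t) (b t) ∨ ¬ inR (ε t) (i t) ∨ ¬ inR (ε t) (j t)) :
    tz q ε a b i j = 0 := by
  refine tz_zero_of q ε fun c hc => ?_
  have := hc t
  simp only [inR] at h
  by_cases ht : ε t = true
  · simp only [ht, forall_const] at h this
    omega
  · simp only [ht] at h
    simp at h
    omega

end

/-! ### The intertwining relations for matrix elements -/

section
variable {n : ℕ}

/-- The weight shift `e_r - e_p` on occupation vectors. -/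
def dv (p r : Fin n) : Fin n → ℤ := fun t => (if t = r then 1 else 0) - (if t = p then 1 else 0)

theorem dv_self (r : Fin n) : dv r r = 0 := by
  funext t
  simp [dv]

theorem dv_left {p r : Fin n} (h : p ≠ r) : dv p r p = -1 := by simp [dv, h]

theorem dv_right {p r : Fin n} (h : p ≠ r) : dv p r r = 1 := by simp [dv, h.symm]

theorem dv_other {p r t : Fin n} (h : t ≠ p) (h' : t ≠ r) : dv p r t = 0 := by simp [dv, h, h']

theorem sum_dv (p r : Fin n) : ∑ t, dv p r t = 0 := by
  simp [dv, Finset.sum_sub_distrib]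

theorem prod_split {p r : Fin n} (h : p ≠ r) (g : Fin n → ℂ) :
    ∏ t, g t = g p * g r * ∏ t ∈ (Finset.univ.erase p).erase r, g t := by
  rw [← Finset.mul_prod_erase _ _ (Finset.mem_univ p), mul_assoc,
    Finset.mul_prod_erase _ _ (Finset.mem_erase.mpr ⟨h.symm, Finset.mem_univ r⟩)]

variable [NeZero n]

/-- Evaluation of a coefficient of a matrix element whose labels differ from the reference labels
`a b i j` (with auxiliary profile `C`) at the two sites `p` and `r` only. -/
theorem tz_coeff_local (q : ℂ) (ε : Fin n → Bool) {p r : Fin n} (hpr : p ≠ r)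
    {a b i j C a' b' i' j' C' : Fin n → ℤ} (hs : p + 1 = r)
    (hC' : ∀ t, b' t + C' t = j' t + C' (t + 1)) {N : ℤ} (hN : C' 0 = N)
    (h : ∀ t, t ≠ p → t ≠ r → a' t = a t ∧ b' t = b t ∧ i' t = i t ∧ j' t = j t)
    (hC : ∀ t, t ≠ r → C' t = C t) :
    (tz q ε a' b' i' j').coeff N =
      sZ q (ε p) (a' p) (b' p) (C p) (i' p) (j' p) (C' r) *
        sZ q (ε r) (a' r) (b' r) (C' r) (i' r) (j' r) (C (r + 1)) *
        ∏ t ∈ (Finset.univ.erase p).erase r,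
          sZ q (ε t) (a t) (b t) (C t) (i t) (j t) (C (t + 1)) := by
  have hr : r + 1 ≠ r := by
    intro h
    have : (1 : Fin n) = 0 := by simpa using h
    rw [this, add_zero] at hs
    exact hpr hs
  rw [tz_coeff q ε hC' hN, prod_split hpr, hs, hC p hpr, hC (r + 1) hr]
  congr 1
  refine Finset.prod_congr rfl fun t ht => ?_
  simp only [Finset.mem_erase, Finset.mem_univ, and_true] at ht
  obtain ⟨h1, h2, h3, h4⟩ := h t ht.2 ht.1
  have ht1 : t + 1 ≠ r := fun h => ht.2 (add_right_cancel (h.trans hs.symm))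
  rw [h1, h2, h3, h4, hC t ht.1, hC (t + 1) ht1]

/-- The relation for `e`, coefficient by coefficient. In the terms of the first tensor factor the
label at the cut is shifted exactly when the cut lies between the two sites, that is for `r = 0`;
this accounts for the spectral parameter `z`. -/
theorem core_e {q : ℂ} (hq0 : q ≠ 0) (hq : ∀ k : ℕ, k ≠ 0 → q ^ k ≠ 1) (ε : Fin n → Bool)
    {p r : Fin n} (hpr : p ≠ r) (hs : p + 1 = r) {a b i j : Fin n → ℤ}
    (ha : ∀ t, inR (ε t) (a t)) (hb : ∀ t, inR (ε t) (b t)) (hi : ∀ t, inR (ε t) (i t))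
    (hj : ∀ t, inR (ε t) (j t)) (N : ℤ) :
    qn q (a p + 1) * (tz q ε (a - dv p r) b i j).coeff (N - if r = 0 then 1 else 0) +
      qe q (ε p) ^ (-a p) * qe q (ε r) ^ a r * qn q (b p + 1) *
        (tz q ε a (b - dv p r) i j).coeff N =
    qn q (j p) * (tz q ε a b i (j + dv p r)).coeff N +
      qn q (i p) * (qe q (ε p) ^ (-j p) * qe q (ε r) ^ j r) *
        (tz q ε a b (i + dv p r) j).coeff (N - if r = 0 then 1 else 0) := by
  by_cases hsum : ∑ t, b t = ∑ t, j t
  swap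
  · rw [tz_zero_sum q ε hsum, tz_zero_sum q ε hsum, tz_zero_sum, tz_zero_sum]
    · simp
    · simpa [Finset.sum_add_distrib, sum_dv] using hsum
    · simpa [Finset.sum_sub_distrib, sum_dv] using hsum
  by_cases hw : ∀ t, a t + b t = i t + j t + dv p r t
  swap
  · push Not at hw
    obtain ⟨t, ht⟩ := hw
    rw [tz_zero_site q ε t, tz_zero_site q ε t, tz_zero_site q ε t, tz_zero_site q ε t]
    · simp
    all_goals simp only [Pi.add_apply, Pi.sub_apply]; omega
  obtain ⟨C, hC0, hC⟩ := cyc_exists hsum (N - if r = 0 then 1 else 0)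
  have hCp := hC p
  have hCr := hC r
  rw [hs] at hCp
  have hwp := hw p
  have hwr := hw r
  rw [dv_left hpr] at hwp
  rw [dv_right hpr] at hwr
  have hC1 : ∀ t, (t + 1 = r ↔ t = p) := fun t =>
    ⟨fun h => add_right_cancel (h.trans hs.symm), fun h => h ▸ hs⟩
  -- the profile after the auxiliary label shared by `p` and `r` is raised
  let C' : Fin n → ℤ := fun t => C t + if t = r then 1 else 0
  have hC'0 : C' 0 = N := by
    simp only [C', hC0, eq_comm (a := (0 : Fin n)), sub_add_cancel]
  have T1 := tz_coeff_local q ε hpr (a := a) (b := b) (i := i) (j := j) (C := C)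
    (a' := a - dv p r) (b' := b) (i' := i) (j' := j) (C' := C) hs hC hC0
    (fun t h1 h2 => by simp [dv_other h1 h2]) (fun t _ => rfl)
  have T2 := tz_coeff_local q ε hpr (a := a) (b := b) (i := i) (j := j) (C := C)
    (a' := a) (b' := b - dv p r) (i' := i) (j' := j) (C' := C') hs
    (fun t => by
      have := hC t
      simp only [C', dv, Pi.sub_apply, hC1]
      omega) hC'0
    (fun t h1 h2 => by simp [dv_other h1 h2]) (fun t h => by simp [C', h])
  have T3 := tz_coeff_local q ε hpr (a := a) (b := b) (i := i) (j := j) (C := C)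
    (a' := a) (b' := b) (i' := i) (j' := j + dv p r) (C' := C') hs
    (fun t => by
      have := hC t
      simp only [C', dv, Pi.add_apply, hC1]
      omega) hC'0
    (fun t h1 h2 => by simp [dv_other h1 h2]) (fun t h => by simp [C', h])
  have T4 := tz_coeff_local q ε hpr (a := a) (b := b) (i := i) (j := j) (C := C)
    (a' := a) (b' := b) (i' := i + dv p r) (j' := j) (C' := C) hs hC hC0
    (fun t h1 h2 => by simp [dv_other h1 h2]) (fun t _ => rfl)
  have hC'r : C' r = C r + 1 := by simp [C']
  simp only [Pi.add_apply, Pi.sub_apply, dv_left hpr, dv_right hpr, hC'r, sub_neg_eq_add,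
    ← sub_eq_add_neg] at T1 T2 T3 T4
  rw [T1, T2, T3, T4]
  have H := pair_e hq0 hq (C r) (C p) (C (r + 1)) (ha p) (hb p) (hi p) (hj p) (ha r) (hb r)
    (hi r) (hj r) (by omega) hCp (by omega) hCr
  linear_combination (∏ t ∈ (Finset.univ.erase p).erase r,
    sZ q (ε t) (a t) (b t) (C t) (i t) (j t) (C (t + 1))) * H

/-- The relation for `f`, coefficient by coefficient. -/
theorem core_f {q : ℂ} (hq0 : q ≠ 0) (hq : ∀ k : ℕ, k ≠ 0 → q ^ k ≠ 1) (ε : Fin n → Bool)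
    {p r : Fin n} (hpr : p ≠ r) (hs : p + 1 = r) {a b i j : Fin n → ℤ}
    (ha : ∀ t, inR (ε t) (a t)) (hb : ∀ t, inR (ε t) (b t)) (hi : ∀ t, inR (ε t) (i t))
    (hj : ∀ t, inR (ε t) (j t)) (N : ℤ) :
    qn q (b r + 1) * (tz q ε a (b + dv p r) i j).coeff N +
      qn q (a r + 1) * (qe q (ε p) ^ b p * qe q (ε r) ^ (-b r)) *
        (tz q ε (a + dv p r) b i j).coeff (N + if r = 0 then 1 else 0) =
    qn q (i r) * (tz q ε a b (i - dv p r) j).coeff (N + if r = 0 then 1 else 0) +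
      qe q (ε p) ^ i p * qe q (ε r) ^ (-i r) * qn q (j r) *
        (tz q ε a b i (j - dv p r)).coeff N := by
  by_cases hsum : ∑ t, b t = ∑ t, j t
  swap
  · rw [tz_zero_sum q ε hsum, tz_zero_sum q ε hsum, tz_zero_sum, tz_zero_sum]
    · simp
    · simpa [Finset.sum_sub_distrib, sum_dv] using hsum
    · simpa [Finset.sum_add_distrib, sum_dv] using hsum
  by_cases hw : ∀ t, a t + b t + dv p r t = i t + j t
  swap
  · push Not at hw
    obtain ⟨t, ht⟩ := hw
    rw [tz_zero_site q ε t, tz_zero_site q ε t, tz_zero_site q ε t, tz_zero_site q ε t]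
    · simp
    all_goals simp only [Pi.add_apply, Pi.sub_apply]; omega
  obtain ⟨C, hC0, hC⟩ := cyc_exists (b := b + dv p r) (j := j)
    (by simpa [Finset.sum_add_distrib, sum_dv] using hsum) N
  have hCp := hC p
  have hCr := hC r
  simp only [hs, Pi.add_apply, dv_left hpr, dv_right hpr] at hCp hCr
  have hwp := hw p
  have hwr := hw r
  rw [dv_left hpr] at hwp
  rw [dv_right hpr] at hwr
  have hC1 : ∀ t, (t + 1 = r ↔ t = p) := fun t =>
    ⟨fun h => add_right_cancel (h.trans hs.symm), fun h => h ▸ hs⟩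
  -- the profile after the auxiliary label shared by `p` and `r` is raised
  let C' : Fin n → ℤ := fun t => C t + if t = r then 1 else 0
  have hC'0 : C' 0 = N + if r = 0 then 1 else 0 := by
    simp only [C', hC0, eq_comm (a := (0 : Fin n))]
  have hC' : ∀ t, b t + C' t = j t + C' (t + 1) := fun t => by
    have := hC t
    simp only [C', dv, Pi.add_apply, hC1] at this ⊢
    omega
  have T1 := tz_coeff_local q ε hpr (a := a) (b := b) (i := i) (j := j) (C := C)
    (a' := a) (b' := b + dv p r) (i' := i) (j' := j) (C' := C) hs hC hC0
    (fun t h1 h2 => by simp [dv_other h1 h2]) (fun t _ => rfl)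
  have T2 := tz_coeff_local q ε hpr (a := a) (b := b) (i := i) (j := j) (C := C)
    (a' := a + dv p r) (b' := b) (i' := i) (j' := j) (C' := C') hs hC' hC'0
    (fun t h1 h2 => by simp [dv_other h1 h2]) (fun t h => by simp [C', h])
  have T3 := tz_coeff_local q ε hpr (a := a) (b := b) (i := i) (j := j) (C := C)
    (a' := a) (b' := b) (i' := i - dv p r) (j' := j) (C' := C') hs hC' hC'0
    (fun t h1 h2 => by simp [dv_other h1 h2]) (fun t h => by simp [C', h])
  have T4 := tz_coeff_local q ε hpr (a := a) (b := b) (i := i) (j := j) (C := C)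
    (a' := a) (b' := b) (i' := i) (j' := j - dv p r) (C' := C) hs
    (fun t => by
      have := hC t
      simp only [Pi.add_apply, Pi.sub_apply] at this ⊢
      omega) hC0
    (fun t h1 h2 => by simp [dv_other h1 h2]) (fun t _ => rfl)
  have hC'r : C' r = C r + 1 := by simp [C']
  simp only [Pi.add_apply, Pi.sub_apply, dv_left hpr, dv_right hpr, hC'r, sub_neg_eq_add,
    ← sub_eq_add_neg] at T1 T2 T3 T4
  rw [T1, T2, T3, T4]
  have H := pair_f hq0 hq (C r) (C p) (C (r + 1)) (ha p) (hb p) (hi p) (hj p) (ha r) (hb r)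
    (hi r) (hj r) (by omega) (by omega) (by omega) (by omega)
  linear_combination (∏ t ∈ (Finset.univ.erase p).erase r,
    sZ q (ε t) (a t) (b t) (C t) (i t) (j t) (C (t + 1))) * H

end

/-! ### Matrix elements of the operators -/

section
variable {L : Type} [Field L] {n : ℕ} {ε : Fin n → Bool}

/-- The occupation vector of a basis label, with integer entries. -/
def iZ (m : Idx ε) : Fin n → ℤ := fun t => (m.1 t : ℤ)

theorem iZ_inj {m m' : Idx ε} (h : iZ m = iZ m') : m = m' :=
  Subtype.ext (funext fun t => Int.natCast_inj.mp (congrFun h t))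

theorem inR_iZ (m : Idx ε) (t : Fin n) : inR (ε t) (iZ m t) :=
  ⟨Int.natCast_nonneg _, fun h => by have := m.2 t h; simp only [iZ]; omega⟩

theorem exists_iZ {x : Fin n → ℤ} (h : ∀ t, inR (ε t) (x t)) : ∃ m : Idx ε, iZ m = x := by
  refine ⟨⟨fun t => (x t).toNat, fun t ht => ?_⟩, funext fun t => ?_⟩
  · have := (h t).2 ht
    dsimp only
    omega
  · have := (h t).1
    simp only [iZ]
    omega

theorem inR_of_ok {x : Fin n → ℤ} (h : (∀ t, 0 ≤ x t) ∧ Ok ε fun t => (x t).toNat) (t : Fin n) :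
    inR (ε t) (x t) :=
  ⟨h.1 t, fun ht => by have := h.2 t ht; dsimp only at this; omega⟩

theorem ok_iZ (m : Idx ε) : (∀ t, 0 ≤ iZ m t) ∧ Ok ε fun t => (iZ m t).toNat :=
  ⟨fun t => (inR_iZ m t).1, fun t ht => by simpa [iZ] using m.2 t ht⟩

theorem ket_iZ (m : Idx ε) : ket L ε (iZ m) = Finsupp.single m 1 := by
  rw [ket, dif_pos (ok_iZ m)]
  congr 1

theorem ket_out {x : Fin n → ℤ} (h : ¬ ∀ t, inR (ε t) (x t)) : ket L ε x = 0 :=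
  dif_neg fun h' => h (inR_of_ok h')

theorem kk_iZ (m m' : Idx ε) : kk L ε (iZ m) (iZ m') = Finsupp.single (m, m') 1 := by
  rw [kk, dif_pos ⟨ok_iZ m, ok_iZ m'⟩]
  congr 1

theorem kk_out {x y : Fin n → ℤ} (h : ¬ ((∀ t, inR (ε t) (x t)) ∧ ∀ t, inR (ε t) (y t))) :
    kk L ε x y = 0 :=
  dif_neg fun h' => h ⟨inR_of_ok h'.1, inR_of_ok h'.2⟩

open Classical in
theorem kk_apply (x y : Fin n → ℤ) (m : Idx ε × Idx ε) :
    kk L ε x y m = if x = iZ m.1 ∧ y = iZ m.2 then 1 else 0 := by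
  by_cases h : (∀ t, inR (ε t) (x t)) ∧ ∀ t, inR (ε t) (y t)
  · obtain ⟨u, rfl⟩ := exists_iZ h.1
    obtain ⟨v, rfl⟩ := exists_iZ h.2
    rw [kk_iZ, Finsupp.single_apply]
    refine if_congr ⟨?_, ?_⟩ rfl rfl
    · rintro rfl
      exact ⟨rfl, rfl⟩
    · rintro ⟨h1, h2⟩
      exact Prod.ext (iZ_inj h1) (iZ_inj h2)
  · rw [kk_out h, if_neg]
    · rfl
    · rintro ⟨rfl, rfl⟩
      exact h ⟨inR_iZ _, inR_iZ _⟩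

theorem mkEnd_single {α : Type} (v : α → (α →₀ L)) (m : α) (c : L) :
    mkEnd L v (Finsupp.single m c) = c • v m := by
  simp [mkEnd]

theorem mkEnd_apply {α : Type} (v : α → (α →₀ L)) (w : α →₀ L) (m : α) :
    mkEnd L v w m = w.sum fun m' c => c * v m' m := by
  rw [mkEnd, Finsupp.lsum_apply, Finsupp.sum, Finsupp.finsetSum_apply]
  rfl

/-- The operator `|m⟩ ↦ γ(m) |m + d⟩` on `𝒲`. -/
def sh (γ : (Fin n → ℤ) → L) (d : Fin n → ℤ) : W L ε →ₗ[L] W L ε :=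
  mkEnd L fun m => γ (iZ m) • ket L ε (iZ m + d)

/-- The operator `|a⟩⊗|b⟩ ↦ γ(a,b) |a + d⟩⊗|b + d'⟩` on `𝒲⊗𝒲`. -/
def sh2 (γ : (Fin n → ℤ) → (Fin n → ℤ) → L) (d d' : Fin n → ℤ) : WW L ε →ₗ[L] WW L ε :=
  mkEnd L fun m => γ (iZ m.1) (iZ m.2) • kk L ε (iZ m.1 + d) (iZ m.2 + d')

theorem tens_ket (c c' : L) (x y : Fin n → ℤ) :
    tens L (c • ket L ε x) (c' • ket L ε y) = (c * c') • kk L ε x y := by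
  by_cases hx : ∀ t, inR (ε t) (x t)
  swap
  · rw [ket_out hx, kk_out fun h => hx h.1]
    simp [tens]
  by_cases hy : ∀ t, inR (ε t) (y t)
  swap
  · rw [ket_out hy, kk_out fun h => hy h.2]
    simp [tens]
  obtain ⟨u, rfl⟩ := exists_iZ hx
  obtain ⟨v, rfl⟩ := exists_iZ hy
  rw [ket_iZ, ket_iZ, kk_iZ, Finsupp.smul_single, Finsupp.smul_single, Finsupp.smul_single, tens,
    Finsupp.sum_single_index, Finsupp.sum_single_index]
  · simp
  · simp
  · simp

theorem opT_sh (γ γ' : (Fin n → ℤ) → L) (d d' : Fin n → ℤ) :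
    opT L (sh γ d : W L ε →ₗ[L] W L ε) (sh γ' d') = sh2 (fun a b => γ a * γ' b) d d' := by
  rw [opT, sh2]
  congr 1
  funext m
  rw [sh, sh, mkEnd_single, mkEnd_single, one_smul, one_smul, tens_ket]

theorem id_eq_sh : (LinearMap.id : W L ε →ₗ[L] W L ε) = sh (fun _ => 1) 0 := by
  refine Finsupp.lhom_ext fun m c => ?_
  rw [sh, mkEnd_single, add_zero, ket_iZ]
  simp

theorem sh2_single (γ : (Fin n → ℤ) → (Fin n → ℤ) → L) (d d' : Fin n → ℤ) (m : Idx ε × Idx ε) :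
    sh2 γ d d' (Finsupp.single m 1) =
      γ (iZ m.1) (iZ m.2) • kk L ε (iZ m.1 + d) (iZ m.2 + d') := by
  rw [sh2, mkEnd_single, one_smul]

/-- Action of a shift operator on coordinates. The coordinates of the argument are encoded by a
function `V` on all of `ℤⁿ × ℤⁿ` which vanishes out of range, so that no boundary cases arise. -/
theorem sh2_apply (γ : (Fin n → ℤ) → (Fin n → ℤ) → L) (d d' : Fin n → ℤ) (v : WW L ε)
    (V : (Fin n → ℤ) → (Fin n → ℤ) → L) (hv : ∀ m, v m = V (iZ m.1) (iZ m.2))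
    (hV : ∀ x y, ¬ ((∀ t, inR (ε t) (x t)) ∧ ∀ t, inR (ε t) (y t)) → V x y = 0)
    (m : Idx ε × Idx ε) :
    sh2 γ d d' v m =
      γ (iZ m.1 - d) (iZ m.2 - d') * V (iZ m.1 - d) (iZ m.2 - d') := by
  classical
  rw [sh2, mkEnd_apply, Finsupp.sum]
  simp only [Finsupp.smul_apply, smul_eq_mul, kk_apply]
  by_cases h : (∀ t, inR (ε t) ((iZ m.1 - d) t)) ∧ ∀ t, inR (ε t) ((iZ m.2 - d') t)
  · obtain ⟨u, hu⟩ := exists_iZ h.1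
    obtain ⟨w, hw⟩ := exists_iZ h.2
    rw [Finset.sum_eq_single (u, w)]
    · rw [hu, hw, if_pos ⟨by abel, by abel⟩, hv, hu, hw]
      ring
    · rintro ⟨u', w'⟩ - hne
      rw [if_neg, mul_zero, mul_zero]
      rintro ⟨h1, h2⟩
      refine hne (Prod.ext (iZ_inj ?_) (iZ_inj ?_))
      · rw [hu, ← h1]; dsimp only; abel
      · rw [hw, ← h2]; dsimp only; abel
    · intro hn
      rw [Finsupp.notMem_support_iff.mp hn, zero_mul]
  · rw [hV _ _ h, mul_zero]
    refine Finset.sum_eq_zero fun m' _ => ?_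
    rw [if_neg, mul_zero, mul_zero]
    rintro ⟨h1, h2⟩
    refine h ⟨?_, ?_⟩
    · rw [← h1, add_sub_cancel_right]; exact inR_iZ _
    · rw [← h2, add_sub_cancel_right]; exact inR_iZ _

theorem end_ext {A B : WW K ε →ₗ[K] WW K ε}
    (h : ∀ ij m, A (Finsupp.single ij 1) m = B (Finsupp.single ij 1) m) : A = B :=
  Finsupp.lhom_ext' fun ij => LinearMap.ext_ring (Finsupp.ext fun m => h ij m)

theorem dlt_self (r t : Fin n) : (dlt (r : ℕ) : Fin n → ℤ) t = if t = r then 1 else 0 := by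
  simp only [dlt, Fin.ext_iff]

theorem av_self (r : Fin n) (m : Fin n → ℕ) : av m (r : ℕ) = m r :=
  dif_pos _

theorem qc_self (q : ℂ) (r : Fin n) : qc q ε (r : ℕ) = qe q (ε r) :=
  dif_pos _

end

section
variable {n : ℕ} [NeZero n] {ε : Fin n → Bool}

/-- The matrix elements of `S₀(z)`. The sum in its definition runs over the `a` allowed by
`a + b = i + j`; other matrix elements vanish on both sides. -/
theorem S0tr_single (q : ℂ) (ij m : Idx ε × Idx ε) :
    S0tr q ε (Finsupp.single ij 1) m = tz q ε (iZ m.1) (iZ m.2) (iZ ij.1) (iZ ij.2) := by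
  classical
  rw [S0tr, mkEnd_single, one_smul, Finsupp.finsetSum_apply]
  simp only [Finsupp.smul_apply, smul_eq_mul, kk_apply]
  by_cases h : ∀ t, iZ m.1 t + iZ m.2 t = iZ ij.1 t + iZ ij.2 t
  · have hN : ∀ t, m.1.1 t + m.2.1 t = ij.1.1 t + ij.2.1 t := fun t => by
      have := h t
      simp only [iZ] at this
      omega
    rw [Finset.sum_eq_single m.1.1]
    · rw [if_pos, mul_one, tz, if_pos]
      · simp only [iZ, Int.toNat_natCast]
        congr 3
        funext t
        have := hN t
        omega
      · exact fun t => ⟨(inR_iZ _ t).1, (inR_iZ _ t).1, (inR_iZ _ t).1, (inR_iZ _ t).1⟩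
      · refine ⟨rfl, funext fun t => ?_⟩
        have := h t
        simp only [iZ] at this ⊢
        omega
    · intro a _ ha
      rw [if_neg, mul_zero]
      rintro ⟨h1, -⟩
      exact ha (funext fun t => Int.natCast_inj.mp (congrFun h1 t))
    · intro hn
      refine absurd (Fintype.mem_piFinset.mpr fun t => Finset.mem_range.mpr ?_) hn
      have := hN t
      omega
  · push Not at h
    obtain ⟨t, ht⟩ := h
    rw [tz_zero_site q ε t ht]
    refine Finset.sum_eq_zero fun a _ => ?_
    rw [if_neg, mul_zero]
    rintro ⟨h1, h2⟩
    apply ht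
    rw [← h1, ← h2]
    simp [iZ]

theorem tz_out (q : ℂ) {a b i j : Fin n → ℤ}
    (h : ¬ ((∀ t, inR (ε t) (a t)) ∧ ∀ t, inR (ε t) (b t))) : tz q ε a b i j = 0 := by
  by_cases ha : ∀ t, inR (ε t) (a t)
  · have hb : ¬ ∀ t, inR (ε t) (b t) := fun hb => h ⟨ha, hb⟩
    push Not at hb
    obtain ⟨t, ht⟩ := hb
    exact tz_zero_range q ε t (Or.inr (Or.inl ht))
  · push Not at ha
    obtain ⟨t, ht⟩ := ha
    exact tz_zero_range q ε t (Or.inl ht)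

theorem tz_out' (q : ℂ) {a b i j : Fin n → ℤ}
    (h : ¬ ((∀ t, inR (ε t) (i t)) ∧ ∀ t, inR (ε t) (j t))) : tz q ε a b i j = 0 := by
  by_cases ha : ∀ t, inR (ε t) (i t)
  · have hb : ¬ ∀ t, inR (ε t) (j t) := fun hb => h ⟨ha, hb⟩
    push Not at hb
    obtain ⟨t, ht⟩ := hb
    exact tz_zero_range q ε t (Or.inr (Or.inr (Or.inr ht)))
  · push Not at ha
    obtain ⟨t, ht⟩ := ha
    exact tz_zero_range q ε t (Or.inr (Or.inr (Or.inl ht)))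

theorem S0tr_kk (q : ℂ) (x y : Fin n → ℤ) (m : Idx ε × Idx ε) :
    S0tr q ε (kk K ε x y) m = tz q ε (iZ m.1) (iZ m.2) x y := by
  by_cases h : (∀ t, inR (ε t) (x t)) ∧ ∀ t, inR (ε t) (y t)
  · obtain ⟨u, rfl⟩ := exists_iZ h.1
    obtain ⟨v, rfl⟩ := exists_iZ h.2
    rw [kk_iZ, S0tr_single]
  · rw [kk_out h, tz_out' q h, map_zero]
    rfl

theorem sh2_S0tr (q : ℂ) (γ : (Fin n → ℤ) → (Fin n → ℤ) → K) (d d' : Fin n → ℤ)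
    (ij m : Idx ε × Idx ε) :
    sh2 γ d d' (S0tr q ε (Finsupp.single ij 1)) m =
      γ (iZ m.1 - d) (iZ m.2 - d') *
        tz q ε (iZ m.1 - d) (iZ m.2 - d') (iZ ij.1) (iZ ij.2) :=
  sh2_apply γ d d' _ (fun x y => tz q ε x y (iZ ij.1) (iZ ij.2))
    (fun m => S0tr_single q ij m) (fun _ _ h => tz_out q h) m

theorem S0tr_sh2 (q : ℂ) (γ : (Fin n → ℤ) → (Fin n → ℤ) → K) (d d' : Fin n → ℤ)
    (ij m : Idx ε × Idx ε) :
    S0tr q ε (sh2 γ d d' (Finsupp.single ij 1)) m =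
      γ (iZ ij.1) (iZ ij.2) * tz q ε (iZ m.1) (iZ m.2) (iZ ij.1 + d) (iZ ij.2 + d') := by
  rw [sh2_single, map_smul, Finsupp.smul_apply, smul_eq_mul, S0tr_kk]

/-! ### The generators as shift operators -/

/-- The site cyclically preceding `r`. -/
def prv (r : Fin n) : Fin n := ⟨((r : ℕ) + n - 1) % n, Nat.mod_lt _ (NeZero.pos n)⟩

theorem prv_add_one (r : Fin n) : prv r + 1 = r := by
  ext
  rw [Fin.val_add, Fin.val_one', prv, Nat.add_mod_mod, Nat.mod_add_mod,
    show (r : ℕ) + n - 1 + 1 = r + n by have := NeZero.pos n; omega, Nat.add_mod_right,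
    Nat.mod_eq_of_lt r.2]

theorem prv_eq_iff (r : Fin n) (h : prv r = r) : n = 1 := by
  have h1 := prv_add_one r
  rw [h] at h1
  have h2 : (1 : Fin n) = 0 := by simpa using h1
  have h3 := congrArg Fin.val h2
  rw [Fin.val_one', Fin.val_zero] at h3
  have := NeZero.pos n
  by_contra hn
  rw [Nat.mod_eq_of_lt (by omega)] at h3
  omega

variable {L : Type} [Field L]

theorem dlt_prv (r t : Fin n) :
    (dlt (((r : ℕ) + n - 1) % n) : Fin n → ℤ) t = if t = prv r then 1 else 0 := by
  simp only [dlt, prv, Fin.ext_iff]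

theorem av_prv (r : Fin n) (m : Fin n → ℕ) : av m (((r : ℕ) + n - 1) % n) = m (prv r) :=
  dif_pos _

theorem qc_prv (q : ℂ) (r : Fin n) : qc q ε (((r : ℕ) + n - 1) % n) = qe q (ε (prv r)) :=
  dif_pos _

theorem eA_eq (q : ℂ) (ι : ℂ →+* L) (x : L) (r : Fin n) :
    eA q ι ε x r = sh (fun a => x ^ (if r = 0 then (1 : ℤ) else 0) * ι (qn q (a (prv r))))
      (dv (prv r) r) := by
  rw [eA, sh]
  congr 1
  funext m
  rw [av_prv, qnum_eq]
  congr 2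
  · simp only [Fin.ext_iff, Fin.val_zero]
    split_ifs <;> simp
  · funext t
    rw [dlt_prv, dlt_self]
    simp only [Pi.add_apply, dv, iZ]
    ring

theorem fA_eq (q : ℂ) (ι : ℂ →+* L) (x : L) (r : Fin n) :
    fA q ι ε x r = sh (fun a => x ^ (if r = 0 then (-1 : ℤ) else 0) * ι (qn q (a r)))
      (-dv (prv r) r) := by
  rw [fA, sh]
  congr 1
  funext m
  rw [av_self, qnum_eq]
  congr 2
  · simp only [Fin.ext_iff, Fin.val_zero]
  · funext t
    rw [dlt_prv, dlt_self]
    simp only [Pi.add_apply, Pi.neg_apply, dv, iZ]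
    ring

/-- The eigenvalue of `k_r` on `|a⟩`. -/
def kw (q : ℂ) (ε : Fin n → Bool) (r : Fin n) (a : Fin n → ℤ) : ℂ :=
  qe q (ε (prv r)) ^ (-a (prv r)) * qe q (ε r) ^ a r

theorem kA_eq (q : ℂ) (ι : ℂ →+* L) (s : ℤ) (r : Fin n) :
    kA q ι ε s r = sh (fun a => ι (kw q ε r a ^ s)) 0 := by
  rw [kA, sh]
  congr 1
  funext m
  rw [av_self, av_prv, qc_self, qc_prv, add_zero, ket_iZ]
  rfl

/-! ### The intertwining relations over the field of Laurent series -/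

theorem zK_zpow (m : ℤ) : zK ^ m = HahnSeries.single m (1 : ℂ) := by
  have h : zK = HahnSeries.single (1 : ℤ) (1 : ℂ) := by
    rw [zK, mkS, ← HahnSeries.ofPowerSeries_X]
    congr 1
    ext m
    rw [PowerSeries.coeff_mk, PowerSeries.coeff_X]
  have hpow : ∀ k : ℕ, zK ^ k = HahnSeries.single (k : ℤ) (1 : ℂ) := fun k => by
    rw [h, HahnSeries.single_pow]
    simp
  obtain ⟨k, rfl | rfl⟩ := m.eq_nat_or_neg
  · rw [zpow_natCast, hpow]
  · rw [zpow_neg, zpow_natCast, hpow]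
    refine inv_eq_of_mul_eq_one_left ?_
    rw [HahnSeries.single_mul_single]
    simp

theorem coeff_cK (α : ℂ) (s : K) (N : ℤ) : (cK α * s).coeff N = α * s.coeff N := by
  rw [cK, HahnSeries.C_mul_eq_smul]
  rfl

theorem coeff_zK (m : ℤ) (s : K) (N : ℤ) : (zK ^ m * s).coeff N = s.coeff (N - m) := by
  rw [zK_zpow]
  have := HahnSeries.coeff_single_mul_add (r := (1 : ℂ)) (x := s) (a := N - m) (b := m)
  rwa [sub_add_cancel, one_mul] at this


theorem qe_ne_zero {q : ℂ} (hq0 : q ≠ 0) (e : Bool) : qe q e ≠ 0 := by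
  cases e <;> simp [qe, hq0]

theorem kw_ne_zero {q : ℂ} (hq0 : q ≠ 0) (r : Fin n) (a : Fin n → ℤ) : kw q ε r a ≠ 0 :=
  mul_ne_zero (zpow_ne_zero _ (qe_ne_zero hq0 _)) (zpow_ne_zero _ (qe_ne_zero hq0 _))

theorem kw_mul {q : ℂ} (hq0 : q ≠ 0) (r : Fin n) (a b : Fin n → ℤ) :
    kw q ε r a * kw q ε r b = kw q ε r (a + b) := by
  simp only [kw, Pi.add_apply, neg_add]
  rw [zpow_add₀ (qe_ne_zero hq0 _), zpow_add₀ (qe_ne_zero hq0 _)]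
  ring

theorem kw_inv (q : ℂ) (r : Fin n) (a : Fin n → ℤ) :
    kw q ε r a ^ (-1 : ℤ) = qe q (ε (prv r)) ^ a (prv r) * qe q (ε r) ^ (-a r) := by
  rw [kw, zpow_neg_one, mul_inv, ← zpow_neg, ← zpow_neg, neg_neg]

theorem kw_of_eq {q : ℂ} (hq0 : q ≠ 0) {r : Fin n} (h : prv r = r) (a : Fin n → ℤ) :
    kw q ε r a = 1 := by
  rw [kw, h, ← zpow_add₀ (qe_ne_zero hq0 _), neg_add_cancel, zpow_zero]

/-- For `n = 1` the solution is diagonal. -/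
theorem tz_one (q : ℂ) (hn : n = 1) {a b i j : Fin n → ℤ} (h : ¬ (a = i ∧ b = j)) :
    tz q ε a b i j = 0 := by
  subst hn
  by_cases hb : b 0 = j 0
  · refine tz_zero_site q ε 0 fun h0 => h ⟨?_, ?_⟩
    · funext t
      rw [Subsingleton.elim t 0]
      omega
    · funext t
      rw [Subsingleton.elim t 0, hb]
  · exact tz_zero_sum q ε (by simpa using hb)

/-- The matrix element of `Δ'(e_r) S₀(z) = S₀(z) Δ(e_r)`. For `n = 1` the generator does not move
any occupation number and the equation is trivial. -/
theorem rel_e {q : ℂ} (hq0 : q ≠ 0) (hq : ∀ k : ℕ, k ≠ 0 → q ^ k ≠ 1) (r : Fin n)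
    {a b i j : Fin n → ℤ}
    (ha : ∀ t, inR (ε t) (a t)) (hb : ∀ t, inR (ε t) (b t)) (hi : ∀ t, inR (ε t) (i t))
    (hj : ∀ t, inR (ε t) (j t)) :
    zK ^ (if r = 0 then (1 : ℤ) else 0) * (cK (qn q ((a - dv (prv r) r) (prv r))) *
        tz q ε (a - dv (prv r) r) b i j) +
      cK (kw q ε r a) * (cK (qn q ((b - dv (prv r) r) (prv r))) *
        tz q ε a (b - dv (prv r) r) i j) =
    cK (qn q (j (prv r))) * tz q ε a b i (j + dv (prv r) r) +
      zK ^ (if r = 0 then (1 : ℤ) else 0) * (cK (qn q (i (prv r))) * (cK (kw q ε r j) *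
        tz q ε a b (i + dv (prv r) r) j)) := by
  by_cases hpr : prv r = r
  · rw [kw_of_eq hq0 hpr, kw_of_eq hq0 hpr, hpr, dv_self, map_one, sub_zero, sub_zero, add_zero,
      add_zero]
    by_cases h : a = i ∧ b = j
    · rw [h.1, h.2]
      ring
    · rw [tz_one q (prv_eq_iff r hpr) h]
      ring
  · ext N
    have h := core_e hq0 hq ε hpr (prv_add_one r) ha hb hi hj N
    simp only [HahnSeries.coeff_add, coeff_zK, coeff_cK, Pi.sub_apply, dv_left hpr,
      sub_neg_eq_add, kw]
    linear_combination h

/-- The matrix element of `Δ'(f_r) S₀(z) = S₀(z) Δ(f_r)`. -/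
theorem rel_f {q : ℂ} (hq0 : q ≠ 0) (hq : ∀ k : ℕ, k ≠ 0 → q ^ k ≠ 1) (r : Fin n)
    {a b i j : Fin n → ℤ}
    (ha : ∀ t, inR (ε t) (a t)) (hb : ∀ t, inR (ε t) (b t)) (hi : ∀ t, inR (ε t) (i t))
    (hj : ∀ t, inR (ε t) (j t)) :
    cK (qn q ((b + dv (prv r) r) r)) * tz q ε a (b + dv (prv r) r) i j +
      zK ^ (if r = 0 then (-1 : ℤ) else 0) * (cK (qn q ((a + dv (prv r) r) r)) *
        (cK (kw q ε r b ^ (-1 : ℤ)) * tz q ε (a + dv (prv r) r) b i j)) =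
    zK ^ (if r = 0 then (-1 : ℤ) else 0) * (cK (qn q (i r)) *
        tz q ε a b (i - dv (prv r) r) j) +
      cK (kw q ε r i ^ (-1 : ℤ)) * (cK (qn q (j r)) *
        tz q ε a b i (j - dv (prv r) r)) := by
  by_cases hpr : prv r = r
  · rw [kw_of_eq hq0 hpr, kw_of_eq hq0 hpr, hpr, dv_self, one_zpow, map_one, sub_zero, sub_zero,
      add_zero, add_zero]
    by_cases h : a = i ∧ b = j
    · rw [h.1, h.2]
      ring
    · rw [tz_one q (prv_eq_iff r hpr) h]
      ring
  · ext N
    have h := core_f hq0 hq ε hpr (prv_add_one r) ha hb hi hj N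
    have hN : N - (if r = 0 then (-1 : ℤ) else 0) = N + if r = 0 then 1 else 0 := by
      split_ifs <;> ring
    simp only [HahnSeries.coeff_add, coeff_zK, coeff_cK, Pi.add_apply, dv_right hpr, kw_inv, hN]
    linear_combination h

/-- The matrix element of the relation for `k_r^s`: the eigenvalue depends only on `a + b`, which is
conserved. -/
theorem rel_k {q : ℂ} (hq0 : q ≠ 0) (r : Fin n) (s : ℤ) (a b i j : Fin n → ℤ) :
    cK (kw q ε r a ^ s) * cK (kw q ε r b ^ s) * tz q ε a b i j =
      cK (kw q ε r i ^ s) * cK (kw q ε r j ^ s) * tz q ε a b i j := by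
  by_cases h : a + b = i + j
  · rw [← map_mul, ← map_mul, ← mul_zpow, ← mul_zpow, kw_mul hq0, kw_mul hq0, h]
  · have : ¬ ∀ t, a t + b t = i t + j t := fun h' => h (funext h')
    push Not at this
    obtain ⟨t, ht⟩ := this
    rw [tz_zero_site q ε t ht, mul_zero, mul_zero]

end

/-! ### The intertwining property -/

/-- the unnormalized trace solution commutes with the type-A
generalized quantum group action, at `x = z`, `y = 1`. -/
theorem statement_0 (q : ℂ) (hq0 : q ≠ 0) (hq : ∀ k : ℕ, k ≠ 0 → q ^ k ≠ 1)
    (n : ℕ) [NeZero n] (ε : Fin n → Bool) (r : Fin n) :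
    dE' q cK ε zK 1 r ∘ₗ S0tr q ε = S0tr q ε ∘ₗ dE q cK ε zK 1 r ∧
    dF' q cK ε zK 1 r ∘ₗ S0tr q ε = S0tr q ε ∘ₗ dF q cK ε zK 1 r ∧
    ∀ s : ℤ, s = 1 ∨ s = -1 →
      dK q cK ε s r ∘ₗ S0tr q ε = S0tr q ε ∘ₗ dK q cK ε s r := by
  refine ⟨end_ext fun ij m => ?_, end_ext fun ij m => ?_, fun s _ => end_ext fun ij m => ?_⟩
  · have h := rel_e hq0 hq r (inR_iZ m.1) (inR_iZ m.2) (inR_iZ ij.1) (inR_iZ ij.2)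
    simp only [dE', dE, eA_eq, kA_eq, id_eq_sh, opT_sh, LinearMap.comp_apply, LinearMap.add_apply,
      map_add, Finsupp.add_apply, sh2_S0tr, S0tr_sh2, sub_zero, add_zero, one_zpow, zpow_one]
    linear_combination h
  · have h := rel_f hq0 hq r (inR_iZ m.1) (inR_iZ m.2) (inR_iZ ij.1) (inR_iZ ij.2)
    simp only [dF', dF, fA_eq, kA_eq, id_eq_sh, opT_sh, LinearMap.comp_apply, LinearMap.add_apply,
      map_add, Finsupp.add_apply, sh2_S0tr, S0tr_sh2, sub_zero, add_zero, one_zpow,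
      sub_neg_eq_add, ← sub_eq_add_neg]
    linear_combination h
  · simp only [dK, kA_eq, opT_sh, LinearMap.comp_apply, sh2_S0tr, S0tr_sh2, sub_zero, add_zero]
    exact rel_k hq0 r s _ _ _ _

end TetraGQ
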